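/- arXiv:0909.5199 — 5 statements merged into one kernel-verified Lean document; each statement's English description precedes it below -/
import Mathlib

section
/- For all n ≥ 1 and k ≥ 1, the number of up-down permutations π of [n+1] with extr(π) = k equals the number of up-down permutations π of [n+1] with lrm(π) + st(π) − 2 = k; that is, the statistics extr and lrm + st − 2 are equidistributed on up-down permutations. -/
open Equiv Finset

/-- `π` is an up-down permutation of `[n]` in one-line notation (0-indexed):
`π 0 < π 1 > π 2 < π 3 > ⋯`. -/
def IsUpDownPerm {n : ℕ} (π : Equiv.Perm (Fin n)) : Prop :=
  ∀ i j : Fin n, (j : ℕ) = (i : ℕ) + 1 →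
    (((i : ℕ) % 2 = 0 → π i < π j) ∧ ((i : ℕ) % 2 = 1 → π j < π i))

/-- The Euler number `E n`: the number of up-down permutations of `[n]`. -/
noncomputable def eulerE (n : ℕ) : ℕ :=
  Nat.card {π : Equiv.Perm (Fin n) // IsUpDownPerm π}

/-- The length of the cycle of `π` containing `x` (fixed points give length `1`). -/
noncomputable def cycLen {n : ℕ} (π : Equiv.Perm (Fin n)) (x : Fin n) : ℕ :=
  Function.minimalPeriod (⇑π) x

/-- `x` is the smallest element of its cycle of `π`. -/
def IsOrbitMin {n : ℕ} (π : Equiv.Perm (Fin n)) (x : Fin n) : Prop :=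
  ∀ k : ℕ, x ≤ (π ^ k) x

/-- The cyclic representation `x, π x, π² x, …` (of length `cycLen π x`) of the
cycle of `π` containing `x` has the up-down pattern `x < π x > π² x < ⋯`. -/
def CycleUpDownAt {n : ℕ} (π : Equiv.Perm (Fin n)) (x : Fin n) : Prop :=
  ∀ i : ℕ, i + 1 < cycLen π x →
    ((i % 2 = 0 → (π ^ i) x < (π ^ (i + 1)) x) ∧
     (i % 2 = 1 → (π ^ (i + 1)) x < (π ^ i) x))

/-- `π` is cycle-up-down: every cycle, written in standard form
(starting at its smallest element), is up-down. -/
def IsCUD {n : ℕ} (π : Equiv.Perm (Fin n)) : Prop :=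
  ∀ x : Fin n, IsOrbitMin π x → CycleUpDownAt π x

/-- The number of cycles of `π` (fixed points included), counted via the
smallest elements of the cycles. -/
noncomputable def cycleCount {n : ℕ} (π : Equiv.Perm (Fin n)) : ℕ :=
  Nat.card {x : Fin n // IsOrbitMin π x}

/-- The number of cycles of `π` of even length. -/
noncomputable def evenCycleCount {n : ℕ} (π : Equiv.Perm (Fin n)) : ℕ :=
  Nat.card {x : Fin n // IsOrbitMin π x ∧ Even (cycLen π x)}

/-- The number of cycles of `π` of odd length. -/
noncomputable def oddCycleCount {n : ℕ} (π : Equiv.Perm (Fin n)) : ℕ :=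
  Nat.card {x : Fin n // IsOrbitMin π x ∧ Odd (cycLen π x)}

/-- The number of excedances of `π`. -/
noncomputable def excCount {n : ℕ} (π : Equiv.Perm (Fin n)) : ℕ :=
  Nat.card {i : Fin n // i < π i}

/-- The number of left-to-right minima of `π` (in one-line notation). -/
noncomputable def lrmCount {n : ℕ} (π : Equiv.Perm (Fin n)) : ℕ :=
  Nat.card {i : Fin n // ∀ j : Fin n, j < i → π i < π j}

/-- The number of extreme elements of `π`: entries in position `≥ 2`
(0-indexed: position `≥ 1`) that are left-to-right minima or maxima. -/
noncomputable def extrCount {n : ℕ} (π : Equiv.Perm (Fin n)) : ℕ :=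
  Nat.card {i : Fin n // (i : ℕ) ≠ 0 ∧
    ((∀ j : Fin n, j < i → π i < π j) ∨ (∀ j : Fin n, j < i → π j < π i))}

/-- Auxiliary (fuel-based) computation of the length of the `s`-driven
min/max subsequence of a list: at step `j` (0-indexed) pick the minimum of the
remaining list if `s j = true`, its maximum if `s j = false`, and continue with
the part of the list strictly to the right of the picked entry. -/
def msLenAux : ℕ → (ℕ → Bool) → List ℕ → ℕ
  | 0, _, _ => 0
  | _, _, [] => 0
  | fuel + 1, s, a :: t =>
      let l := a :: t
      let v := if s 0 then l.foldr min a else l.foldr max a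
      1 + msLenAux fuel (fun i => s (i + 1)) ((l.dropWhile (· != v)).tail)

/-- The length of the `s`-driven min/max subsequence of a list
(`s j = true` means minimum at step `j`, `s j = false` means maximum). -/
def msLen (s : ℕ → Bool) (l : List ℕ) : ℕ := msLenAux l.length s l

/-- The one-line notation of `π` as a list of natural numbers. -/
def oneLine {n : ℕ} (π : Equiv.Perm (Fin n)) : List ℕ :=
  List.ofFn fun i => ((π i : ℕ))

/-- The statistic `m_s(π)`: the length of the `s`-driven min/max subsequence
of the one-line notation of `π`. -/
def msStat {n : ℕ} (s : ℕ → Bool) (π : Equiv.Perm (Fin n)) : ℕ :=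
  msLen s (oneLine π)

/-- `st π`: the length of the min-max sequence of `π` (alternately take the
minimum, the maximum, the minimum, … of what remains to the right). -/
def stStat {n : ℕ} (π : Equiv.Perm (Fin n)) : ℕ :=
  msStat (fun i => i % 2 == 0) π

/-- `π` is a cyclic permutation: it consists of a single cycle. -/
def IsCyclicPerm {n : ℕ} (π : Equiv.Perm (Fin n)) : Prop :=
  ∀ x y : Fin n, π.SameCycle x y

/-- The number of up-down cycles of `π` having length `k`. -/
noncomputable def udLenCount {n : ℕ} (π : Equiv.Perm (Fin n)) (k : ℕ) : ℕ :=
  Nat.card {x : Fin n // IsOrbitMin π x ∧ cycLen π x = k ∧ CycleUpDownAt π x}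

/-- `ud π`: the number of up-down cycles of `π`. -/
noncomputable def udCount {n : ℕ} (π : Equiv.Perm (Fin n)) : ℕ :=
  Nat.card {x : Fin n // IsOrbitMin π x ∧ CycleUpDownAt π x}

/-- `r n`: the number of permutations of `[n]` having no up-down cycles. -/
noncomputable def noUDCyclesCount (n : ℕ) : ℕ :=
  Nat.card {π : Equiv.Perm (Fin n) // ∀ x : Fin n, IsOrbitMin π x → ¬ CycleUpDownAt π x}

/-!
A minimal or maximal letter `e` cuts an alternating word `A e B` into two independent alternating
words, and the parity of the length of `A` is prescribed. Let `E = E₀ + E₁` be the exponential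
generating function of the alternating words, split into its even and odd parts, and weight words
by powers of `t`.

* Cutting at the minimum gives `W' = t E₀ W` for the length of the min-max sequence and
  `L' = t E₁ L` for the left-to-right minima of words of even length.
* Of the smallest and the largest letter, cut at the one that comes last; the parity of the length
  of `A` tells which of the two it is, so that `X' = t E X` for the extreme elements of words with
  one additional letter.
* For words with one additional letter, cutting at the minimum shows that `lrm + st` has the
  generating function `t² L W`.

Since `exp (∫ t E₁) * exp (∫ t E₀) = exp (∫ t E)`, this is `t² X`.
-/

namespace UpDown

section BinomialConvolution

variable {R : Type*}

/-- The binomial convolution of two sequences, which is the product of their exponential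
generating functions. -/
def binomialConv [Semiring R] (f g : ℕ → R) (n : ℕ) : R :=
  ∑ p ∈ antidiagonal n, n.choose p.1 • (f p.1 * g p.2)

/-- The sequence with exponential generating function `exp (∫ g)`, where `g` stands for the
exponential generating function of the given sequence; it is defined through the differential
equation `F' = g * F`, `F 0 = 1`. -/
def binomialExp [Semiring R] (g : ℕ → R) : ℕ → R
  | 0 => 1
  | n + 1 => ∑ k : Fin (n + 1), n.choose k • (g k * binomialExp g (n - k))

/-- The exponential generating function of a sequence. -/
noncomputable def egf [CommRing R] [Algebra ℚ R] (f : ℕ → R) : PowerSeries R :=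
  PowerSeries.mk fun n => (n.factorial : ℚ)⁻¹ • f n

lemma binomialExp_zero [Semiring R] (g : ℕ → R) : binomialExp g 0 = 1 := by
  rw [binomialExp]

lemma binomialExp_succ [Semiring R] (g : ℕ → R) (n : ℕ) :
    binomialExp g (n + 1) = binomialConv g (binomialExp g) n := by
  rw [binomialExp, Fin.sum_univ_eq_sum_range fun k => n.choose k • (g k * binomialExp g (n - k)),
    binomialConv, Nat.sum_antidiagonal_eq_sum_range_succ_mk]

lemma eq_binomialExp_of_succ [Semiring R] {f g : ℕ → R} (hzero : f 0 = 1)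
    (hsucc : ∀ n, f (n + 1) = binomialConv g f n) : f = binomialExp g := by
  funext n
  induction n using Nat.strong_induction_on with
  | _ n ih =>
    cases n with
    | zero => rw [hzero, binomialExp_zero]
    | succ n =>
      rw [hsucc, binomialExp_succ]
      refine sum_congr rfl fun p hp => ?_
      rw [ih p.2 (by have := HasAntidiagonal.mem_antidiagonal.1 hp; omega)]

lemma sum_powerset_card_mul_card [Semiring R] {α : Type*} [DecidableEq α] (f g : ℕ → R)
    (S : Finset α) :
    ∑ T ∈ S.powerset, f #T * g #(S \ T) = binomialConv f g #S := by
  rw [binomialConv, Nat.sum_antidiagonal_eq_sum_range_succ_mk,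
    ← sum_powerset_apply_card fun k => f k * g (#S - k)]
  refine sum_congr rfl fun T hT => ?_
  rw [card_sdiff_of_subset (mem_powerset.1 hT)]

lemma sum_powerset_sdiff_comm {α M : Type*} [DecidableEq α] [AddCommMonoid M]
    (f : Finset α → Finset α → M) (S : Finset α) :
    ∑ T ∈ S.powerset, f T (S \ T) = ∑ T ∈ S.powerset, f (S \ T) T :=
  sum_nbij' (S \ ·) (S \ ·) (fun _ _ => mem_powerset.2 sdiff_subset)
    (fun _ _ => mem_powerset.2 sdiff_subset)
    (fun _ hT => Finset.sdiff_sdiff_eq_self (mem_powerset.1 hT))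
    (fun _ hT => Finset.sdiff_sdiff_eq_self (mem_powerset.1 hT))
    (fun _ hT => by rw [Finset.sdiff_sdiff_eq_self (mem_powerset.1 hT)])

lemma eq_binomialExp_of_sum_powerset [Semiring R] {ι α : Type*} [DecidableEq α] (Φ : ι → R)
    (size : ι → ℕ) (g : ℕ → R) (hzero : ∀ i, size i = 0 → Φ i = 1)
    (hsucc : ∀ i n, size i = n + 1 → ∃ (U : Finset α) (rest : Finset α → ι), #U = n ∧
      (∀ T ⊆ U, size (rest T) = #(U \ T)) ∧
      Φ i = ∑ T ∈ U.powerset, g #T * Φ (rest T)) (i : ι) :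
    Φ i = binomialExp g (size i) := by
  induction hi : size i using Nat.strong_induction_on generalizing i with
  | _ m ih =>
    cases m with
    | zero => rw [hzero i hi, binomialExp_zero]
    | succ n =>
      obtain ⟨U, rest, rfl, hrest, hΦ⟩ := hsucc i n hi
      rw [hΦ, binomialExp_succ, ← sum_powerset_card_mul_card]
      refine sum_congr rfl fun T hT => ?_
      rw [ih _ (Nat.lt_succ_of_le (card_le_card sdiff_subset)) _ (hrest T (mem_powerset.1 hT))]

variable [CommRing R] [Algebra ℚ R]

lemma egf_binomialConv (f g : ℕ → R) : egf (binomialConv f g) = egf f * egf g := by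
  ext n
  simp only [PowerSeries.coeff_mul, egf, PowerSeries.coeff_mk, binomialConv, smul_sum]
  refine sum_congr rfl fun p hp => ?_
  rw [smul_mul_smul_comm, ← Nat.cast_smul_eq_nsmul ℚ, smul_smul]
  congr 1
  obtain rfl := mem_antidiagonal.1 hp
  rw [Nat.cast_add_choose]
  have := (p.1 + p.2).factorial_ne_zero
  field_simp

lemma derivative_egf (f : ℕ → R) :
    PowerSeries.derivative R (egf f) = egf fun n => f (n + 1) := by
  ext n
  have hcast : (n : R) + 1 = algebraMap ℚ R (n + 1) := by simp
  rw [PowerSeries.coeff_derivative, egf, egf, PowerSeries.coeff_mk, PowerSeries.coeff_mk, hcast,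
    mul_comm, ← Algebra.smul_def, smul_smul, Nat.factorial_succ]
  congr 1
  push_cast
  field_simp

lemma egf_injective : Function.Injective (egf : (ℕ → R) → PowerSeries R) := by
  intro f g h
  funext n
  have hn : (n.factorial : ℚ) ≠ 0 := Nat.cast_ne_zero.2 n.factorial_ne_zero
  simpa [egf, hn] using congrArg (fun F => (n.factorial : ℚ) • PowerSeries.coeff n F) h

lemma egf_add (f g : ℕ → R) : egf (f + g) = egf f + egf g := by
  ext n
  simp [egf]

lemma derivative_egf_binomialExp (g : ℕ → R) :
    PowerSeries.derivative R (egf (binomialExp g)) = egf g * egf (binomialExp g) := by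
  rw [derivative_egf, ← egf_binomialConv, funext (binomialExp_succ g)]

lemma binomialConv_binomialExp (g h : ℕ → R) :
    binomialConv (binomialExp g) (binomialExp h) = binomialExp (g + h) := by
  refine eq_binomialExp_of_succ (by simp [binomialConv, binomialExp_zero]) (congrFun ?_)
  apply egf_injective
  rw [← derivative_egf, egf_binomialConv, Derivation.leibniz, derivative_egf_binomialExp,
    derivative_egf_binomialExp, egf_binomialConv, egf_binomialConv, egf_add]
  simp only [smul_eq_mul]
  ring

end BinomialConvolution

section Words

variable {α : Type*} [DecidableEq α] {S : Finset α} {e : α}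

/-- The words in which every letter of `S` occurs exactly once. -/
def words (S : Finset α) : Finset (List α) := S.val.lists.toFinset

lemma mem_words {l : List α} : l ∈ words S ↔ l.Nodup ∧ l.toFinset = S := by
  rw [words, Multiset.mem_toFinset, Multiset.mem_lists_iff, Multiset.quot_mk_to_coe]
  constructor
  · intro h
    have hl : l.Nodup := by rw [← Multiset.coe_nodup, ← h]; exact S.nodup
    exact ⟨hl, by rw [← Finset.val_inj, List.toFinset_val, hl.dedup, h]⟩
  · rintro ⟨hl, rfl⟩
    rw [List.toFinset_val, hl.dedup]

lemma words_empty : words (∅ : Finset α) = {[]} := by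
  ext l
  rw [mem_words, List.toFinset_eq_empty_iff, mem_singleton]
  exact and_iff_right_of_imp fun hl => hl ▸ List.nodup_nil

lemma words_singleton (a : α) : words {a} = {[a]} := by
  ext l
  rw [words, Multiset.mem_toFinset, Multiset.mem_lists_iff, singleton_val, mem_singleton,
    ← Multiset.coe_singleton, Multiset.quot_mk_to_coe, Multiset.coe_eq_coe,
    List.singleton_perm]
  exact eq_comm

lemma length_of_mem_words {l : List α} (hl : l ∈ words S) : l.length = #S := by
  obtain ⟨hnodup, rfl⟩ := mem_words.1 hl
  exact (List.toFinset_card_of_nodup hnodup).symm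

lemma mem_iff_of_mem_words {l : List α} (hl : l ∈ words S) (x : α) : x ∈ l ↔ x ∈ S := by
  rw [← (mem_words.1 hl).2, List.mem_toFinset]

lemma append_cons_mem_words (he : e ∈ S) {T : Finset α} (hT : T ⊆ S.erase e) {A B : List α}
    (hA : A ∈ words (S.erase e \ T)) (hB : B ∈ words T) : A ++ e :: B ∈ words S := by
  have hmemA := mem_iff_of_mem_words hA
  have hmemB := mem_iff_of_mem_words hB
  refine mem_words.2 ⟨?_, ?_⟩
  · rw [List.nodup_middle, List.nodup_cons, List.nodup_append']
    refine ⟨by grind, (mem_words.1 hA).1, (mem_words.1 hB).1, fun x hxA hxB => ?_⟩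
    exact (mem_sdiff.1 ((hmemA x).1 hxA)).2 ((hmemB x).1 hxB)
  · ext x
    rw [List.mem_toFinset, List.mem_append, List.mem_cons, hmemA, hmemB]
    grind

lemma split_of_append_cons_mem_words {A B : List α} (h : A ++ e :: B ∈ words S) :
    B.toFinset ⊆ S.erase e ∧ A ∈ words (S.erase e \ B.toFinset) ∧ B ∈ words B.toFinset := by
  obtain ⟨hnodup, rfl⟩ := mem_words.1 h
  rw [List.nodup_middle, List.nodup_cons, List.nodup_append'] at hnodup
  obtain ⟨heAB, hA, hB, hdisj⟩ := hnodup
  refine ⟨fun x hx => ?_, mem_words.2 ⟨hA, ?_⟩, mem_words.2 ⟨hB, rfl⟩⟩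
  · grind [List.mem_toFinset]
  · ext x
    have := @hdisj x
    grind [List.mem_toFinset]

lemma sum_words_eq_sum_append_cons {M : Type*} [AddCommMonoid M] (he : e ∈ S)
    (F : List α → M) :
    ∑ l ∈ words S, F l = ∑ T ∈ (S.erase e).powerset, ∑ A ∈ words (S.erase e \ T),
      ∑ B ∈ words T, F (A ++ e :: B) := by
  simp_rw [← sum_product']
  rw [sum_sigma']
  symm
  refine sum_bij (fun p _ => p.2.1 ++ e :: p.2.2) ?_ ?_ ?_ fun _ _ => rfl
  · rintro ⟨T, A, B⟩ h
    simp only [mem_sigma, mem_product, mem_powerset] at h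
    exact append_cons_mem_words he h.1 h.2.1 h.2.2
  · rintro ⟨T, A, B⟩ h ⟨T', A', B'⟩ h' heq
    simp only [mem_sigma, mem_product, mem_powerset] at h h' heq
    have heA : e ∉ A := by rw [mem_iff_of_mem_words h.2.1]; simp
    have heB : e ∉ B := fun heB =>
      notMem_erase e S (h.1 ((mem_iff_of_mem_words h.2.2 e).1 heB))
    obtain ⟨rfl, -, rfl⟩ := (List.append_cons_inj_of_notMem heA heB).1 heq
    obtain rfl : T = T' := (mem_words.1 h.2.2).2.symm.trans (mem_words.1 h'.2.2).2
    rfl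
  · intro l hl
    obtain ⟨A, B, rfl⟩ := List.append_of_mem ((mem_iff_of_mem_words hl e).2 he)
    refine ⟨⟨B.toFinset, A, B⟩, ?_, rfl⟩
    simpa only [mem_sigma, mem_product, mem_powerset] using split_of_append_cons_mem_words hl

lemma idxOf_append_cons_lt_idxOf_iff {A B : List α} {e' : α} (heA : e ∉ A) :
    (A ++ e :: B).idxOf e' < (A ++ e :: B).idxOf e ↔ e' ∈ A := by
  rw [List.idxOf_append_of_notMem heA, List.idxOf_cons_self]
  by_cases h : e' ∈ A
  · simp [h, List.idxOf_append_of_mem, List.idxOf_lt_length_iff]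
  · simp [h, List.idxOf_append_of_notMem]

end Words

section Alternating

variable {α : Type*} [LinearOrder α]

/-- Strict comparison in the direction `b`: `<` if `b = true` and `>` if `b = false`. Treating
both directions at once makes minima and maxima interchangeable. -/
def DirLT (b : Bool) (x y : α) : Prop := if b then x < y else y < x

/-- The words `a₀ a₁ a₂ …` whose steps alternate in direction, the first step having the
direction `b`; thus `true` stands for `a₀ < a₁ > a₂ < ⋯`. -/
def IsAlternating : Bool → List α → Prop
  | _, [] => True
  | _, [_] => True
  | b, a :: c :: t => DirLT b a c ∧ IsAlternating (!b) (c :: t)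

/-- `e` is the minimum of `S` if `b = true`, and its maximum if `b = false`. -/
def IsExtremum (b : Bool) (S : Finset α) (e : α) : Prop :=
  e ∈ S ∧ ∀ x ∈ S.erase e, DirLT b e x

lemma dirLT_not {b : Bool} {x y : α} : DirLT (!b) x y ↔ DirLT b y x := by
  cases b <;> rfl

lemma DirLT.asymm {b : Bool} {x y : α} (h : DirLT b x y) : ¬ DirLT b y x := by
  cases b <;> exact lt_asymm h

lemma DirLT.ne {b : Bool} {x y : α} (h : DirLT b x y) : x ≠ y := by
  rintro rfl
  exact h.asymm h

lemma isAlternating_cons {b c : Bool} {e : α} {B : List α} (hB : ∀ x ∈ B, DirLT c e x)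
    (h : c = b ∨ B ≠ []) : IsAlternating b (e :: B) ↔ c = b ∧ IsAlternating (!c) B := by
  match B, h with
  | [], .inl h => simp [IsAlternating, h]
  | a :: t, _ =>
    have hea := hB a List.mem_cons_self
    rcases Bool.eq_or_eq_not c b with rfl | rfl
    · simp [IsAlternating, hea]
    · simp [IsAlternating, (dirLT_not.1 hea).asymm]

lemma isAlternating_append_cons {c : Bool} {e : α} {B : List α} (hB : ∀ x ∈ B, DirLT c e x) :
    ∀ {A : List α} {b : Bool}, (∀ x ∈ A, DirLT c e x) → (c = b ∨ A ++ B ≠ []) →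
      (IsAlternating b (A ++ e :: B) ↔
        (Even A.length ↔ c = b) ∧ IsAlternating b A ∧ IsAlternating (!c) B)
  | [], b, _, h => by
    simp [isAlternating_cons hB h, IsAlternating]
  | [a], b, hA, _ => by
    have hea := hA a List.mem_cons_self
    simp only [List.cons_append, List.nil_append, IsAlternating]
    rcases Bool.eq_or_eq_not c b with rfl | rfl
    · simp [hea.asymm]
    · simp [isAlternating_cons hB (.inl rfl), dirLT_not.1 hea]
  | a :: a' :: A', b, hA, _ => by
    have ih := isAlternating_append_cons hB (A := a' :: A') (b := !b)
      (fun x hx => hA x (List.mem_cons_of_mem a hx)) (.inr (by simp))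
    have hparity : (Even (a' :: A').length ↔ c = !b) ↔ (Even (a :: a' :: A').length ↔ c = b) := by
      cases b <;> cases c <;> simp [Nat.even_add_one]
    simp only [List.cons_append, IsAlternating] at ih ⊢
    rw [ih, hparity]
    tauto

lemma exists_isExtremum (b : Bool) {S : Finset α} (hS : S.Nonempty) :
    ∃ e, IsExtremum b S e := by
  cases b
  · exact ⟨S.max' hS, S.max'_mem hS, fun x hx => S.lt_max'_of_mem_erase_max' hS hx⟩
  · exact ⟨S.min' hS, S.min'_mem hS, fun x hx => S.min'_lt_of_mem_erase_min' hS hx⟩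

lemma IsExtremum.ne {b : Bool} {S : Finset α} {e e' : α} (he : IsExtremum b S e)
    (he' : IsExtremum (!b) S e') (hS : S.Nontrivial) : e ≠ e' := by
  rintro rfl
  obtain ⟨x, hx, hxe⟩ := hS.exists_ne e
  have hx : x ∈ S.erase e := mem_erase.2 ⟨hxe, hx⟩
  exact (he.2 x hx).asymm (dirLT_not.1 (he'.2 x hx))

open Classical in
/-- The words using every letter of `S` exactly once whose steps alternate, starting in the
direction `b`. -/
noncomputable def altWords (b : Bool) (S : Finset α) : Finset (List α) :=
  {l ∈ words S | IsAlternating b l}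

lemma mem_altWords {b : Bool} {S : Finset α} {l : List α} :
    l ∈ altWords b S ↔ l ∈ words S ∧ IsAlternating b l := by
  simp [altWords]

lemma mem_iff_of_mem_altWords {b : Bool} {S : Finset α} {l : List α} (hl : l ∈ altWords b S)
    (x : α) : x ∈ l ↔ x ∈ S :=
  mem_iff_of_mem_words (mem_altWords.1 hl).1 x

lemma altWords_empty (b : Bool) : altWords b (∅ : Finset α) = {[]} := by
  simp [altWords, words_empty, filter_singleton, IsAlternating]

lemma altWords_singleton (b : Bool) (a : α) : altWords b {a} = {[a]} := by
  simp [altWords, words_singleton, filter_singleton, IsAlternating]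

lemma sum_altWords {M : Type*} [AddCommMonoid M] {b c : Bool} {S : Finset α} {e : α}
    (he : IsExtremum c S e) (h : c = b ∨ S.Nontrivial) (F : List α → M) :
    ∑ l ∈ altWords b S, F l = ∑ T ∈ (S.erase e).powerset,
      if Even #(S.erase e \ T) ↔ c = b then
        ∑ A ∈ altWords b (S.erase e \ T), ∑ B ∈ altWords (!c) T, F (A ++ e :: B) else 0 := by
  classical
  simp_rw [altWords, sum_filter]
  rw [sum_words_eq_sum_append_cons he.1]
  refine sum_congr rfl fun T hT => ?_
  have hT := mem_powerset.1 hT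
  trans ∑ A ∈ words (S.erase e \ T), ∑ B ∈ words T,
    if (Even #(S.erase e \ T) ↔ c = b) ∧ IsAlternating b A ∧ IsAlternating (!c) B then
      F (A ++ e :: B) else 0
  · refine sum_congr rfl fun A hA => sum_congr rfl fun B hB => if_congr ?_ rfl rfl
    have hABS := append_cons_mem_words he.1 hT hA hB
    have hmemA := mem_iff_of_mem_words hA
    have hmemB := mem_iff_of_mem_words hB
    rw [← length_of_mem_words hA]
    refine isAlternating_append_cons (fun x hx => he.2 x (hT ((hmemB x).1 hx)))
      (fun x hx => he.2 x (mem_sdiff.1 ((hmemA x).1 hx)).1) (h.imp_right fun hS hAB => ?_)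
    have hlength := length_of_mem_words hABS
    have := one_lt_card_iff_nontrivial.2 hS
    obtain ⟨rfl, rfl⟩ := List.append_eq_nil_iff.1 hAB
    simp only [List.nil_append, List.length_singleton] at hlength
    omega
  · split_ifs with hparity
    · simp only [hparity, true_and, ite_and, sum_ite_irrel, sum_const_zero]
    · simp only [hparity, false_and, if_false, sum_const_zero]

end Alternating

section Zigzag

/-- The Euler zigzag numbers, which count the alternating words on a given set of letters. -/
def zigzag : ℕ → ℕ
  | 0 => 1
  | n + 1 => ∑ k : Fin (n + 1),
      n.choose k • ((if Even (k : ℕ) then zigzag k else 0) * zigzag (n - k))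

lemma zigzag_zero : zigzag 0 = 1 := by
  rw [zigzag]

lemma zigzag_succ (n : ℕ) :
    zigzag (n + 1) = binomialConv (fun k => if Even k then zigzag k else 0) zigzag n := by
  rw [zigzag, Fin.sum_univ_eq_sum_range
    fun k => n.choose k • ((if Even k then zigzag k else 0) * zigzag (n - k)),
    binomialConv, Nat.sum_antidiagonal_eq_sum_range_succ_mk]

lemma card_altWords {α : Type*} [LinearOrder α] (b : Bool) (S : Finset α) :
    #(altWords b S) = zigzag #S := by
  induction hn : #S using Nat.strong_induction_on generalizing b S with
  | _ n ih =>
    rcases S.eq_empty_or_nonempty with rfl | hS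
    · rw [← hn, altWords_empty, card_singleton, card_empty, zigzag_zero]
    · obtain ⟨e, he⟩ := exists_isExtremum b hS
      have hcard : #(S.erase e) + 1 = n := hn ▸ card_erase_add_one he.1
      subst hcard
      rw [zigzag_succ, ← sum_powerset_card_mul_card, card_eq_sum_ones, sum_altWords he (.inl rfl),
        sum_powerset_sdiff_comm (fun T T' => (if Even #T then zigzag #T else 0) * zigzag #T')]
      refine sum_congr rfl fun T hT => ?_
      have hT := mem_powerset.1 hT
      simp only [iff_true, sum_const, smul_eq_mul, mul_one, ite_mul, zero_mul]
      rw [ih _ (Nat.lt_succ_of_le (card_le_card hT)) _ _ rfl,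
        ih _ (Nat.lt_succ_of_le (card_le_card sdiff_subset)) _ _ rfl]

end Zigzag

section PrefixCount

variable {α : Type*}

open Classical in
/-- The number of letters `a` of a word such that `P p a` holds, where `p` is the part of the
word in front of `a`. -/
noncomputable def prefixCount : (List α → α → Prop) → List α → ℕ
  | _, [] => 0
  | P, a :: t => (if P [] a then 1 else 0) + prefixCount (fun p => P (a :: p)) t

lemma prefixCount_append (P : List α → α → Prop) (A B : List α) :
    prefixCount P (A ++ B) = prefixCount P A + prefixCount (fun p => P (A ++ p)) B := by
  induction A generalizing P with
  | nil => simp [prefixCount]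
  | cons a A ih => simp only [List.cons_append, prefixCount, ih, add_assoc]

lemma prefixCount_eq_zero {P : List α → α → Prop} {l : List α} (h : ∀ p, ∀ a ∈ l, ¬ P p a) :
    prefixCount P l = 0 := by
  induction l generalizing P with
  | nil => rfl
  | cons a l ih =>
    rw [prefixCount, if_neg (h [] a List.mem_cons_self),
      ih fun p x hx => h (a :: p) x (List.mem_cons_of_mem a hx)]

lemma prefixCount_append_cons {P : List α → α → Prop} {A B : List α} {e : α} (he : P A e)
    (hB : ∀ p, ∀ a ∈ B, ¬ P (A ++ e :: p) a) :
    prefixCount P (A ++ e :: B) = prefixCount P A + 1 := by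
  rw [prefixCount_append, prefixCount, List.append_nil, if_pos he, prefixCount_eq_zero hB]

lemma prefixCount_ofFn {n : ℕ} (P : List α → α → Prop) (f : Fin n → α) :
    prefixCount P (List.ofFn f) = Nat.card {i : Fin n // P ((List.ofFn f).take i) (f i)} := by
  classical
  rw [Nat.card_eq_fintype_card, Fintype.card_subtype, card_filter]
  induction n generalizing P with
  | zero => simp [prefixCount]
  | succ n ih =>
    simp only [List.ofFn_succ, prefixCount, ih, Fin.sum_univ_succ, Fin.val_zero, List.take_zero,
      Fin.val_succ, List.take_succ_cons]
    congr

lemma forall_mem_take_ofFn {n : ℕ} (f : Fin n → α) (i : Fin n) (p : α → Prop) :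
    (∀ x ∈ (List.ofFn f).take i, p x) ↔ ∀ j < i, p (f j) := by
  simp only [List.mem_take_iff_getElem, List.getElem_ofFn, List.length_ofFn]
  constructor
  · exact fun h j hj => h _ ⟨j, by omega, rfl⟩
  · rintro h _ ⟨j, hj, rfl⟩
    exact h ⟨j, by omega⟩ (Fin.lt_def.2 (by simp only; omega))

variable [LinearOrder α] {A B : List α} {e : α}

/-- The number of left-to-right minima of a word. -/
noncomputable def lrm : List α → ℕ :=
  prefixCount fun p a => ∀ x ∈ p, a < x

/-- The number of extreme elements of a word, that is, of left-to-right minima and maxima other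
than the first letter. -/
noncomputable def extr : List α → ℕ :=
  prefixCount fun p a => p ≠ [] ∧ ((∀ x ∈ p, a < x) ∨ ∀ x ∈ p, x < a)

lemma lrm_append_cons (hA : ∀ x ∈ A, e < x) (hB : ∀ x ∈ B, e < x) :
    lrm (A ++ e :: B) = lrm A + 1 :=
  prefixCount_append_cons hA fun _ a ha h => lt_asymm (hB a ha) (h e (by simp))

lemma extr_append_cons {c : Bool} {e' : α} (he' : e' ∈ A) (hA : ∀ x ∈ A, DirLT c e x)
    (hB : ∀ x ∈ B, DirLT c e x) (hB' : ∀ x ∈ B, DirLT (!c) e' x) :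
    extr (A ++ e :: B) = extr A + 1 := by
  refine prefixCount_append_cons ⟨List.ne_nil_of_mem he', ?_⟩ ?_
  · cases c
    · exact .inr hA
    · exact .inl hA
  · rintro p a ha ⟨-, h⟩
    have hea := hB a ha
    have hea' := hB' a ha
    cases c
    · exact h.elim (fun h => lt_asymm hea' (h e' (by simp [he'])))
        fun h => lt_asymm hea (h e (by simp))
    · exact h.elim (fun h => lt_asymm hea (h e (by simp)))
        fun h => lt_asymm hea' (h e' (by simp [he']))

lemma extr_append_cons_of_isExtremum {b b' c : Bool} {S T : Finset α} {e' : α}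
    (he : IsExtremum c S e) (he' : IsExtremum (!c) S e') (hT : T ⊆ (S.erase e).erase e')
    (hne : e ≠ e') (hA : A ∈ altWords b (S.erase e \ T)) (hB : B ∈ altWords b' T) :
    extr (A ++ e :: B) = extr A + 1 := by
  have hmemA := mem_iff_of_mem_altWords hA
  have hBT x (hx : x ∈ B) := hT ((mem_iff_of_mem_altWords hB x).1 hx)
  refine extr_append_cons (c := c) (e' := e') ?_ (fun x hx => ?_) (fun x hx => ?_) fun x hx => ?_
  · exact (hmemA e').2 (mem_sdiff.2 ⟨mem_erase.2 ⟨hne.symm, he'.1⟩, fun h => by simpa using hT h⟩)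
  · exact he.2 x (mem_sdiff.1 ((hmemA x).1 hx)).1
  · exact he.2 x (mem_of_mem_erase (hBT x hx))
  · exact he'.2 x (erase_subset_erase e' (erase_subset e S) (hBT x hx))

end PrefixCount

section MinMaxLength

lemma foldr_min_eq {α : Type*} [LinearOrder α] {l : List α} {a e : α} (ha : e ≤ a) (he : e ∈ l)
    (hl : ∀ x ∈ l, e ≤ x) : l.foldr min a = e :=
  le_antisymm (List.min_le_of_le' a he le_rfl)
    (List.foldrRecOn l min ha fun _ hx y hy => le_min (hl y hy) hx)

lemma foldr_max_eq {α : Type*} [LinearOrder α] {l : List α} {a e : α} (ha : a ≤ e) (he : e ∈ l)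
    (hl : ∀ x ∈ l, x ≤ e) : l.foldr max a = e :=
  foldr_min_eq (α := αᵒᵈ) ha he hl

lemma msLenAux_eq_of_length_le {m n : ℕ} {s : ℕ → Bool} {l : List ℕ} (hm : l.length ≤ m)
    (hn : l.length ≤ n) : msLenAux m s l = msLenAux n s l := by
  induction m generalizing n s l with
  | zero =>
    obtain rfl := List.length_eq_zero_iff.1 (Nat.le_zero.1 hm)
    cases n <;> rfl
  | succ m ih =>
    match n, l with
    | 0, [] => rfl
    | _ + 1, [] => rfl
    | n + 1, a :: t =>
      have hlength (p : ℕ → Bool) : ((a :: t).dropWhile p).tail.length ≤ t.length := by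
        have := List.length_dropWhile_le p (a :: t)
        rw [List.length_tail, Nat.sub_le_iff_le_add]
        simpa using this
      simp only [List.length_cons, Nat.add_le_add_iff_right] at hm hn
      simp only [msLenAux]
      rw [ih ((hlength _).trans hm) ((hlength _).trans hn)]

lemma add_one_mod_two_beq (i : ℕ) (b : Bool) :
    (((i + 1) % 2 == 0) == b) = ((i % 2 == 0) == !b) := by
  rcases Nat.mod_two_eq_zero_or_one i with h | h <;> cases b <;> simp [Nat.add_mod, h]

/-- The length of the sequence obtained from a word by alternately taking extremal letters of
what remains to the right, starting with the minimum if `b = true` and with the maximum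
otherwise. -/
def minMaxLength (b : Bool) (l : List ℕ) : ℕ := msLen (fun i => (i % 2 == 0) == b) l

lemma minMaxLength_append_cons {b : Bool} {A B : List ℕ} {e : ℕ} (hA : ∀ x ∈ A, DirLT b e x)
    (hB : ∀ x ∈ B, DirLT b e x) :
    minMaxLength b (A ++ e :: B) = 1 + minMaxLength (!b) B := by
  obtain ⟨a, t, hat⟩ := List.exists_cons_of_ne_nil (l := A ++ e :: B) (by simp)
  have hextr : (if b then (a :: t).foldr min a else (a :: t).foldr max a) = e := by
    have hl : ∀ x ∈ a :: t, x = e ∨ DirLT b e x := by grind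
    have he : e ∈ a :: t := by simp [← hat]
    cases b
    · exact foldr_max_eq ((hl a (by simp)).elim Eq.le le_of_lt) he
        fun x hx => (hl x hx).elim Eq.le le_of_lt
    · exact foldr_min_eq ((hl a (by simp)).elim Eq.ge le_of_lt) he
        fun x hx => (hl x hx).elim Eq.ge le_of_lt
  have htail : ((a :: t).dropWhile (· != e)).tail = B := by
    rw [← hat, List.dropWhile_append_of_pos]
    · simp
    · intro x hx
      have := (hA x hx).ne
      grind
  rw [minMaxLength, msLen, hat, List.length_cons, msLenAux]
  simp only [Nat.zero_mod, BEq.rfl, Bool.true_beq, hextr, htail, add_one_mod_two_beq]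
  rw [minMaxLength, msLen, msLenAux_eq_of_length_le _ le_rfl]
  have := congrArg List.length hat
  simp only [List.length_append, List.length_cons] at this
  omega

end MinMaxLength

section WeightedCount

variable {α R : Type*} [LinearOrder α]

/-- The generating polynomial, evaluated at `t`, of the statistic `stat` on the alternating words
on the letters `S` starting in the direction `b`. -/
noncomputable def weightedCount [CommSemiring R] (stat : List α → ℕ) (t : R) (b : Bool)
    (S : Finset α) : R :=
  ∑ l ∈ altWords b S, t ^ stat l

section CommSemiring

variable [CommSemiring R] (t : R)

lemma weightedCount_zero (b : Bool) (S : Finset α) : weightedCount 0 t b S = zigzag #S := by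
  simp [weightedCount, card_altWords]

lemma weightedCount_empty {stat : List α → ℕ} (hstat : stat [] = 0) (b : Bool) :
    weightedCount stat t b ∅ = 1 := by
  simp [weightedCount, altWords_empty, hstat]

lemma weightedCount_eq_sum_powerset {stat stat₁ stat₂ : List α → ℕ} {k : ℕ} {b : Bool} {e : α}
    {S : Finset α} (he : IsExtremum b S e)
    (hstat : ∀ A B : List α, (∀ x ∈ A, DirLT b e x) → (∀ x ∈ B, DirLT b e x) →
      stat (A ++ e :: B) = k + (stat₁ A + stat₂ B)) :
    weightedCount stat t b S = ∑ T ∈ (S.erase e).powerset, t ^ k *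
      ((if Even #T then weightedCount stat₁ t b T else 0) *
        weightedCount stat₂ t (!b) (S.erase e \ T)) := by
  rw [weightedCount, sum_altWords he (.inl rfl), sum_powerset_sdiff_comm fun T T' => t ^ k *
    ((if Even #T then weightedCount stat₁ t b T else 0) * weightedCount stat₂ t (!b) T')]
  refine sum_congr rfl fun T hT => ?_
  have hT := mem_powerset.1 hT
  simp only [iff_true, ite_mul, zero_mul, mul_ite, mul_zero]
  refine if_congr Iff.rfl ?_ rfl
  rw [weightedCount, weightedCount, sum_mul_sum, mul_sum]
  refine sum_congr rfl fun A hA => ?_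
  rw [mul_sum]
  refine sum_congr rfl fun B hB => ?_
  rw [hstat, pow_add, pow_add]
  · exact fun x hx => he.2 x (mem_sdiff.1 ((mem_iff_of_mem_altWords hA x).1 hx)).1
  · exact fun x hx => he.2 x (hT ((mem_iff_of_mem_altWords hB x).1 hx))

lemma weightedCount_minMaxLength (b : Bool) (S : Finset ℕ) :
    weightedCount (minMaxLength b) t b S =
      binomialExp (fun n => if Even n then t * zigzag n else 0) #S := by
  refine eq_binomialExp_of_sum_powerset (α := ℕ)
    (fun i : Bool × Finset ℕ => weightedCount (minMaxLength i.1) t i.1 i.2) (fun i => #i.2) _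
    ?_ ?_ (b, S)
  · rintro ⟨b, S⟩ hS
    obtain rfl := card_eq_zero.1 hS
    exact weightedCount_empty t rfl b
  · rintro ⟨b, S⟩ n (hS : #S = n + 1)
    obtain ⟨e, he⟩ := exists_isExtremum b (S := S) (card_pos.1 (by omega))
    refine ⟨S.erase e, fun T => (!b, S.erase e \ T), ?_, fun _ _ => rfl, ?_⟩
    · rw [card_erase_of_mem he.1, hS, Nat.add_sub_cancel]
    · rw [weightedCount_eq_sum_powerset t he (k := 1) (stat₁ := 0) (stat₂ := minMaxLength (!b))
        fun A B hA hB => by rw [minMaxLength_append_cons hA hB, Pi.zero_apply, zero_add]]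
      refine sum_congr rfl fun T _ => ?_
      rw [weightedCount_zero, pow_one, ← mul_assoc, mul_ite, mul_zero]

lemma weightedCount_lrm (S : Finset α) :
    (if Even #S then weightedCount lrm t true S else 0) =
      binomialExp (fun n => if Even n then 0 else t * zigzag n) #S := by
  refine eq_binomialExp_of_sum_powerset (α := α)
    (fun S : Finset α => if Even #S then weightedCount lrm t true S else 0) card _ ?_ ?_ S
  · intro S hS
    obtain rfl := card_eq_zero.1 hS
    simp [weightedCount_empty t (stat := lrm) rfl]
  · intro S n hS
    obtain ⟨e, he⟩ := exists_isExtremum true (S := S) (card_pos.1 (by omega))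
    have hU : #(S.erase e) = n := by rw [card_erase_of_mem he.1, hS, Nat.add_sub_cancel]
    refine ⟨S.erase e, fun T => S.erase e \ T, hU, fun _ _ => rfl, ?_⟩
    rw [weightedCount_eq_sum_powerset t he (k := 1) (stat₁ := lrm) (stat₂ := 0)
      fun A B hA hB => by rw [lrm_append_cons hA hB, Pi.zero_apply, add_zero, add_comm]]
    rw [← sum_powerset_sdiff_comm fun T T' => (if Even #T' then 0 else t * (zigzag #T' : R)) *
      if Even #T then weightedCount lrm t true T else 0, ← sum_const_zero, ← sum_ite_irrel]
    refine sum_congr rfl fun T hT => ?_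
    have hparity : Even #S ↔ ¬ (Even #T ↔ Even #(S.erase e \ T)) := by
      rw [hS, ← hU, ← card_sdiff_add_card_eq_card (mem_powerset.1 hT), Nat.even_add_one,
        Nat.even_add, iff_comm (a := Even #T)]
    by_cases hT : Even #T <;> by_cases hT' : Even #(S.erase e \ T) <;>
      simp [hparity, hT, hT', weightedCount_zero, mul_left_comm, mul_comm]

lemma weightedCount_lrm_add_minMaxLength {S : Finset ℕ} (hS : S.Nonempty) :
    weightedCount (lrm + minMaxLength true) t true S =
      t ^ 2 * binomialConv (binomialExp fun n => if Even n then 0 else t * (zigzag n : R))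
        (binomialExp fun n => if Even n then t * (zigzag n : R) else 0) (#S - 1) := by
  obtain ⟨e, he⟩ := exists_isExtremum true hS
  rw [weightedCount_eq_sum_powerset t he (k := 2) (stat₁ := lrm)
    fun A B hA hB => by
      rw [Pi.add_apply, lrm_append_cons hA hB, minMaxLength_append_cons hA hB]
      ring,
    ← card_erase_of_mem he.1, ← sum_powerset_card_mul_card, mul_sum]
  simp only [weightedCount_lrm, weightedCount_minMaxLength, Bool.not_true]

/-- If the largest letter comes after the smallest one, then all extreme elements other than
this largest letter lie in front of it; likewise with the roles exchanged. -/
lemma sum_pow_extr_filter_idxOf_lt {b c : Bool} {S : Finset α} {e e' : α}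
    (he : IsExtremum c S e) (he' : IsExtremum (!c) S e') (hne : e ≠ e') :
    ∑ l ∈ altWords b S with l.idxOf e' < l.idxOf e, t ^ extr l =
      ∑ T ∈ ((S.erase e).erase e').powerset, if Even #(S.erase e \ T) ↔ c = b then
        t * zigzag #T * weightedCount extr t b (S.erase e \ T) else 0 := by
  rw [sum_filter, sum_altWords he (.inr ⟨e, he.1, e', he'.1, hne⟩)]
  have hidxOf : ∀ T, ∀ A ∈ altWords b (S.erase e \ T), ∀ B,
      (A ++ e :: B).idxOf e' < (A ++ e :: B).idxOf e ↔ e' ∉ T := fun T A hA B => by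
    have hmemA := mem_iff_of_mem_altWords hA
    rw [idxOf_append_cons_lt_idxOf_iff (by simp [hmemA]), hmemA]
    simp [hne.symm, he'.1]
  symm
  refine sum_subset_zero_on_sdiff (powerset_mono.2 (erase_subset _ _)) (fun T hT => ?_)
    fun T hT => if_congr Iff.rfl ?_ rfl
  · have heT : e' ∈ T := by
      simp only [mem_sdiff, mem_powerset, subset_erase] at hT
      tauto
    rw [ite_eq_right_iff]
    exact fun _ => sum_eq_zero fun A hA => sum_eq_zero fun B _ =>
      if_neg fun h => (hidxOf T A hA B).1 h heT
  · have hT := mem_powerset.1 hT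
    have heT : e' ∉ T := (subset_erase.1 hT).2
    rw [weightedCount, ← card_altWords (!c), mul_sum]
    refine sum_congr rfl fun A hA => ?_
    rw [mul_comm t, mul_assoc, ← nsmul_eq_mul, ← sum_const]
    refine sum_congr rfl fun B hB => ?_
    rw [if_pos ((hidxOf T A hA B).2 heT), extr_append_cons_of_isExtremum he he' hT hne hA hB,
      pow_succ']

lemma weightedCount_extr_eq_sum_powerset {S : Finset α} {m M : α} (hm : IsExtremum true S m)
    (hM : IsExtremum false S M) (hne : m ≠ M) :
    weightedCount extr t true S = ∑ T ∈ ((S.erase m).erase M).powerset, t * zigzag #T *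
      weightedCount extr t true (S.erase (if Even #(S.erase m \ T) then m else M) \ T) := by
  have hsplit : weightedCount extr t true S =
      ∑ l ∈ altWords true S with l.idxOf M < l.idxOf m, t ^ extr l +
        ∑ l ∈ altWords true S with l.idxOf m < l.idxOf M, t ^ extr l := by
    rw [weightedCount, ← sum_filter_add_sum_filter_not _ fun l : List α => l.idxOf M < l.idxOf m]
    congr 1
    refine sum_congr (filter_congr fun l hl => ?_) fun _ _ => rfl
    have hml : m ∈ l := (mem_iff_of_mem_altWords hl m).2 hm.1
    have : l.idxOf m ≠ l.idxOf M := fun h => hne ((List.idxOf_inj hml).1 h)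
    omega
  rw [hsplit, sum_pow_extr_filter_idxOf_lt t hm hM hne,
    sum_pow_extr_filter_idxOf_lt t hM hm hne.symm, erase_right_comm (a := M), ← sum_add_distrib]
  refine sum_congr rfl fun T hT => ?_
  have hT := mem_powerset.1 hT
  have hcard : #(S.erase M \ T) = #(S.erase m \ T) := by
    rw [card_sdiff_of_subset (hT.trans (erase_subset M _)), card_erase_of_mem hm.1,
      card_sdiff_of_subset (hT.trans (erase_subset_erase M (erase_subset m S))),
      card_erase_of_mem hM.1]
  by_cases hparity : Even #(S.erase m \ T) <;> simp [hcard, hparity]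

lemma weightedCount_extr (S : Finset α) :
    weightedCount extr t true S = binomialExp (fun n => t * (zigzag n : R)) (#S - 1) := by
  refine eq_binomialExp_of_sum_powerset (α := α) (weightedCount extr t true) (fun S => #S - 1) _
    (fun S hcard => ?_) (fun S n hcard => ?_) S
  · rcases S.eq_empty_or_nonempty with rfl | hS
    · exact weightedCount_empty t rfl true
    · obtain ⟨a, rfl⟩ := card_eq_one.1 ((Nat.sub_eq_zero_iff_le.1 hcard).antisymm hS.card_pos)
      simp [weightedCount, altWords_singleton, extr, prefixCount]
  · have hnontrivial : S.Nontrivial := one_lt_card_iff_nontrivial.1 (by omega)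
    obtain ⟨m, hm⟩ := exists_isExtremum true hnontrivial.nonempty
    obtain ⟨M, hM⟩ := exists_isExtremum false hnontrivial.nonempty
    have hne : m ≠ M := hm.ne hM hnontrivial
    have hMm : M ∈ S.erase m := mem_erase.2 ⟨hne.symm, hM.1⟩
    have hcardU : #((S.erase m).erase M) = n := by
      rw [card_erase_of_mem hMm, card_erase_of_mem hm.1, hcard, Nat.add_sub_cancel]
    refine ⟨_, _, hcardU, fun T hT => ?_, weightedCount_extr_eq_sum_powerset t hm hM hne⟩
    have hsub : T ⊆ S.erase (if Even #(S.erase m \ T) then m else M) := by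
      split_ifs
      · exact hT.trans (erase_subset M _)
      · exact hT.trans (erase_subset_erase M (erase_subset m S))
    rw [card_sdiff_of_subset hsub, card_sdiff_of_subset hT, hcardU,
      card_erase_of_mem (by split_ifs <;> [exact hm.1; exact hM.1]), hcard]
    omega

end CommSemiring

variable [CommRing R] [Algebra ℚ R]

theorem weightedCount_lrm_add_minMaxLength_eq_weightedCount_extr (t : R) {S : Finset ℕ}
    (hS : S.Nonempty) :
    weightedCount (lrm + minMaxLength true) t true S = t ^ 2 * weightedCount extr t true S := by
  have hadd : (fun n => if Even n then 0 else t * (zigzag n : R)) +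
      (fun n => if Even n then t * (zigzag n : R) else 0) = fun n => t * (zigzag n : R) := by
    funext n
    by_cases hn : Even n <;> simp [hn]
  rw [weightedCount_lrm_add_minMaxLength t hS, binomialConv_binomialExp, hadd, weightedCount_extr]

lemma coeff_weightedCount_X (stat : List α → ℕ) (b : Bool) (S : Finset α) (k : ℕ) :
    (weightedCount stat (Polynomial.X : Polynomial ℚ) b S).coeff k =
      #{l ∈ altWords b S | stat l = k} := by
  simp [weightedCount, Polynomial.coeff_X_pow, eq_comm]

theorem card_filter_extr_eq_card_filter_lrm_add_minMaxLength {S : Finset ℕ} (hS : S.Nonempty)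
    (k : ℕ) :
    #{l ∈ altWords true S | extr l = k} =
      #{l ∈ altWords true S | lrm l + minMaxLength true l = k + 2} := by
  have h := congrArg (Polynomial.coeff · (k + 2))
    (weightedCount_lrm_add_minMaxLength_eq_weightedCount_extr (Polynomial.X : Polynomial ℚ) hS)
  simp only [Polynomial.coeff_X_pow_mul, coeff_weightedCount_X, Pi.add_apply] at h
  exact_mod_cast h.symm

end WeightedCount

section OneLine

lemma isAlternating_iff_getElem {α : Type*} [LinearOrder α] {b : Bool} {l : List α} :
    IsAlternating b l ↔
      ∀ i (hi : i + 1 < l.length), DirLT ((i % 2 == 0) == b) l[i] l[i + 1] := by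
  induction l generalizing b with
  | nil => simp [IsAlternating]
  | cons a t ih =>
    cases t with
    | nil => simp [IsAlternating]
    | cons c t =>
      rw [IsAlternating, ih]
      constructor
      · rintro ⟨hac, ht⟩ (_ | i) hi
        · simpa using hac
        · rw [add_one_mod_two_beq]
          exact ht i (by simpa using hi)
      · intro h
        refine ⟨by simpa using h 0 (by simp), fun i hi => ?_⟩
        rw [← add_one_mod_two_beq]
        exact h (i + 1) (by simpa using hi)

variable {n : ℕ}

lemma isUpDownPerm_iff_isAlternating (π : Perm (Fin n)) :
    IsUpDownPerm π ↔ IsAlternating true (oneLine π) := by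
  simp only [isAlternating_iff_getElem, oneLine, List.getElem_ofFn, List.length_ofFn]
  constructor
  · intro h i hi
    obtain ⟨heven, hodd⟩ := h ⟨i, by omega⟩ ⟨i + 1, hi⟩ rfl
    rcases Nat.mod_two_eq_zero_or_one i with h | h
    · simpa [DirLT, h] using heven h
    · simpa [DirLT, h] using hodd h
  · rintro h ⟨i, _⟩ ⟨_, hi⟩ rfl
    have hstep := h i hi
    exact ⟨fun h => by simpa [DirLT, h] using hstep, fun h => by simpa [DirLT, h] using hstep⟩

lemma lrmCount_eq_lrm (π : Perm (Fin n)) : lrmCount π = lrm (oneLine π) := by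
  rw [lrm, oneLine, prefixCount_ofFn]
  simp only [forall_mem_take_ofFn, Fin.val_fin_lt, lrmCount]

lemma extrCount_eq_extr (π : Perm (Fin n)) : extrCount π = extr (oneLine π) := by
  rw [extr, oneLine, prefixCount_ofFn]
  have hne (i : Fin n) : (List.ofFn fun j => (π j : ℕ)).take i ≠ [] ↔ (i : ℕ) ≠ 0 := by
    have hn : n ≠ 0 := i.pos.ne'
    simp [List.take_eq_nil_iff, hn]
  simp only [forall_mem_take_ofFn, Fin.val_fin_lt, hne, extrCount]

lemma stStat_eq_minMaxLength (π : Perm (Fin n)) : stStat π = minMaxLength true (oneLine π) := by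
  simp [stStat, msStat, minMaxLength]

lemma oneLine_injective : Function.Injective (oneLine : Perm (Fin n) → List ℕ) :=
  fun _ _ h => Equiv.ext fun i => Fin.ext (congrFun (List.ofFn_injective h) i)

lemma image_oneLine : (univ : Finset (Perm (Fin n))).image oneLine = words (range n) := by
  ext l
  simp only [mem_image, mem_univ, true_and, mem_words]
  constructor
  · rintro ⟨π, rfl⟩
    refine ⟨List.nodup_ofFn.2 (Fin.val_injective.comp π.injective), ?_⟩
    ext x
    rw [List.mem_toFinset, oneLine, List.mem_ofFn, mem_range]
    exact ⟨fun ⟨i, hi⟩ => hi ▸ (π i).isLt, fun hx => ⟨π.symm ⟨x, hx⟩, by simp⟩⟩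
  · rintro ⟨hnodup, hl⟩
    have hlength : l.length = n := by
      rw [← List.toFinset_card_of_nodup hnodup, hl, card_range]
    have hlt (i : Fin n) : l[i] < n := by
      rw [← mem_range, ← hl, List.mem_toFinset]
      exact List.getElem_mem _
    have hinj : Function.Injective fun i : Fin n => (⟨l[i], hlt i⟩ : Fin n) := fun i j hij =>
      Fin.ext ((hnodup.getElem_inj_iff).1 (Fin.val_eq_of_eq hij))
    refine ⟨Equiv.ofBijective _ (Finite.injective_iff_bijective.1 hinj), ?_⟩
    exact List.ext_getElem (by simp [oneLine, hlength]) (by simp [oneLine])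

lemma card_isUpDownPerm_and (P : List ℕ → Prop) [DecidablePred P] :
    Nat.card {π : Perm (Fin n) // IsUpDownPerm π ∧ P (oneLine π)} =
      #{l ∈ altWords true (range n) | P l} := by
  classical
  rw [altWords, filter_filter, ← image_oneLine, filter_image,
    card_image_of_injective _ oneLine_injective, Nat.card_eq_fintype_card, Fintype.card_subtype]
  simp only [isUpDownPerm_iff_isAlternating]

end OneLine

end UpDown

open UpDown

/-- `extr` and `lrm + st − 2` are equidistributed on up-down permutations. -/
theorem stmt12 (n k : ℕ) (hn : 1 ≤ n) (hk : 1 ≤ k) :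
    Nat.card {π : Equiv.Perm (Fin (n + 1)) // IsUpDownPerm π ∧ extrCount π = k} =
      Nat.card {π : Equiv.Perm (Fin (n + 1)) //
        IsUpDownPerm π ∧ lrmCount π + stStat π = k + 2} := by
  simp only [extrCount_eq_extr, lrmCount_eq_lrm, stStat_eq_minMaxLength]
  rw [card_isUpDownPerm_and fun l => extr l = k,
    card_isUpDownPerm_and fun l => lrm l + minMaxLength true l = k + 2]
  exact card_filter_extr_eq_card_filter_lrm_add_minMaxLength nonempty_range_add_one k
end

section
/- For every n ≥ 0 and every cycle-up-down permutation π of [n], one has c_o(π) + 2·exc(π) = n, where c_o(π) is the number of odd-length cycles of π and exc(π) is the number of excedances of π. -/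
open Equiv Finset

/-!
Write a cycle of a cycle-up-down permutation `π` of length `l` as `x, π x, …, π ^ (l - 1) x` with
`x` its minimum. The excedances on it are the points at even positions `i` with `i + 1 < l`, so
their images are the points at odd positions. What remains is the last point when `l` is odd, and
`π` sends that point to the minimum `x`. Hence the excedances, their images, and one point for each
odd cycle partition `[n]`.
-/

lemma ncard_compl_union_image_add_two_mul_ncard {α : Type*} [Finite α] {f : α → α}
    (hf : f.Injective) {s : Set α} (hs : Disjoint s (f '' s)) :
    (s ∪ f '' s)ᶜ.ncard + 2 * s.ncard = Nat.card α := by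
  have card_union : (s ∪ f '' s).ncard = 2 * s.ncard := by
    rw [Set.ncard_union_eq hs, Set.ncard_image_of_injective s hf, two_mul]
  rw [← card_union, add_comm, Set.ncard_add_ncard_compl]

/-- The excedances of `π` as a set; its cardinality is `excCount π`. -/
def excedances {n : ℕ} (π : Equiv.Perm (Fin n)) : Set (Fin n) :=
  {y | y < π y}

/-- The odd-length cycles of `π`, each represented by its minimum as in `oddCycleCount`. -/
def oddCycleMins {n : ℕ} (π : Equiv.Perm (Fin n)) : Set (Fin n) :=
  {x | IsOrbitMin π x ∧ Odd (cycLen π x)}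

section Orbits

variable {n : ℕ} {π : Equiv.Perm (Fin n)} {x : Fin n}

lemma cycLen_pos (π : Equiv.Perm (Fin n)) (x : Fin n) : 0 < cycLen π x :=
  Function.minimalPeriod_pos_of_mem_periodicPts (π.injective.mem_periodicPts x)

lemma cycLen_dvd_iff {k : ℕ} : cycLen π x ∣ k ↔ (π ^ k) x = x := by
  rw [cycLen, ← Function.isPeriodicPt_iff_minimalPeriod_dvd, ← Perm.iterate_eq_pow]
  rfl

lemma pow_cycLen_apply (π : Equiv.Perm (Fin n)) (x : Fin n) : (π ^ cycLen π x) x = x :=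
  cycLen_dvd_iff.mp dvd_rfl

lemma cycLen_pow_apply (π : Equiv.Perm (Fin n)) (x : Fin n) (k : ℕ) :
    cycLen π ((π ^ k) x) = cycLen π x := by
  rw [← Perm.iterate_eq_pow]
  exact Function.minimalPeriod_apply_iterate (π.injective.mem_periodicPts x) k

lemma exists_isOrbitMin_pow_apply_eq (π : Equiv.Perm (Fin n)) (y : Fin n) :
    ∃ x, IsOrbitMin π x ∧ ∃ i < cycLen π x, (π ^ i) x = y := by
  obtain ⟨x, hyx, hmin⟩ := Set.exists_min_image {z | π.SameCycle y z} id (Set.toFinite _)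
    ⟨y, Perm.SameCycle.refl π y⟩
  obtain ⟨k, hk⟩ := Perm.SameCycle.exists_nat_pow_eq hyx.symm
  refine ⟨x, fun j => hmin _ (hyx.trans ⟨j, by simp⟩), k % cycLen π x,
    Nat.mod_lt _ (cycLen_pos π x), ?_⟩
  rw [← hk, ← Perm.iterate_eq_pow, ← Perm.iterate_eq_pow]
  exact Function.iterate_mod_minimalPeriod_eq

lemma IsOrbitMin.le_of_sameCycle (hx : IsOrbitMin π x) {y : Fin n} (hxy : π.SameCycle x y) :
    x ≤ y := by
  obtain ⟨k, rfl⟩ := hxy.exists_nat_pow_eq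
  exact hx k

lemma IsOrbitMin.notMem_image_excedances (hx : IsOrbitMin π x) : x ∉ π '' excedances π := by
  rintro ⟨z, hz, rfl⟩
  exact (hx.le_of_sameCycle (Perm.sameCycle_apply_left.mpr (Perm.SameCycle.refl π z))).not_gt hz

lemma IsOrbitMin.pow_apply_iff (hx : IsOrbitMin π x) {k : ℕ} :
    IsOrbitMin π ((π ^ k) x) ↔ cycLen π x ∣ k := by
  have same_cycle : π.SameCycle x ((π ^ k) x) := ⟨k, by simp⟩
  rw [cycLen_dvd_iff]
  exact ⟨fun hk => le_antisymm (hk.le_of_sameCycle same_cycle.symm) (hx k), fun hk => hk.symm ▸ hx⟩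

lemma IsOrbitMin.apply_pow_mem_oddCycleMins_iff (hx : IsOrbitMin π x) {i : ℕ}
    (hi : i < cycLen π x) :
    π ((π ^ i) x) ∈ oddCycleMins π ↔ i + 1 = cycLen π x ∧ Even i := by
  have last_iff : cycLen π x ∣ i + 1 ↔ i + 1 = cycLen π x :=
    ⟨fun hdvd => le_antisymm hi (Nat.le_of_dvd i.succ_pos hdvd), fun hlast => hlast ▸ dvd_rfl⟩
  rw [← Perm.mul_apply, ← pow_succ', oddCycleMins, Set.mem_ofPred_eq, hx.pow_apply_iff,
    cycLen_pow_apply, last_iff]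
  refine and_congr_right fun hlast => ?_
  rw [← hlast, Nat.odd_add_one, Nat.not_odd_iff_even]

end Orbits

namespace IsCUD

variable {n : ℕ} {π : Equiv.Perm (Fin n)} {x : Fin n} {i : ℕ}

lemma pow_mem_excedances_iff (h : IsCUD π) (hx : IsOrbitMin π x) (hi : i < cycLen π x) :
    (π ^ i) x ∈ excedances π ↔ Even i ∧ i + 1 < cycLen π x := by
  rw [excedances, Set.mem_ofPred_eq, ← Perm.mul_apply, ← pow_succ']
  obtain hlt | hlast : i + 1 < cycLen π x ∨ i + 1 = cycLen π x := by lia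
  · obtain ⟨up, down⟩ := h x hx i hlt
    rcases Nat.even_or_odd i with heven | hodd
    · simp [heven, hlt, up (Nat.even_iff.mp heven)]
    · simp [Nat.not_even_iff_odd.mpr hodd, (down (Nat.odd_iff.mp hodd)).le]
  · rw [hlast, pow_cycLen_apply]
    simp [hx i]

lemma pow_mem_image_excedances_iff (h : IsCUD π) (hx : IsOrbitMin π x) (hi : i < cycLen π x) :
    (π ^ i) x ∈ π '' excedances π ↔ Odd i := by
  rcases i with _ | j
  · simpa using hx.notMem_image_excedances
  · rw [pow_succ', Perm.mul_apply, π.injective.mem_set_image,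
      h.pow_mem_excedances_iff hx (by lia), and_iff_left hi, Nat.odd_add_one,
      Nat.not_odd_iff_even]

lemma disjoint_excedances_image (h : IsCUD π) : Disjoint (excedances π) (π '' excedances π) := by
  rw [Set.disjoint_left]
  intro y
  obtain ⟨x, hx, i, hi, rfl⟩ := exists_isOrbitMin_pow_apply_eq π y
  rw [h.pow_mem_excedances_iff hx hi, h.pow_mem_image_excedances_iff hx hi, Nat.not_odd_iff_even]
  exact And.left

lemma preimage_oddCycleMins_eq (h : IsCUD π) :
    π ⁻¹' oddCycleMins π = (excedances π ∪ π '' excedances π)ᶜ := by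
  ext y
  obtain ⟨x, hx, i, hi, rfl⟩ := exists_isOrbitMin_pow_apply_eq π y
  rw [Set.mem_preimage, hx.apply_pow_mem_oddCycleMins_iff hi, Set.mem_compl_iff, Set.mem_union,
    h.pow_mem_excedances_iff hx hi, h.pow_mem_image_excedances_iff hx hi, ← Nat.not_even_iff_odd]
  grind

end IsCUD

/-- for CUD permutations, `c_o(π) + 2 exc(π) = n`. -/
theorem stmt13 (n : ℕ) (π : Equiv.Perm (Fin n)) (h : IsCUD π) :
    oddCycleCount π + 2 * excCount π = n := by
  calc
    oddCycleCount π + 2 * excCount π = (oddCycleMins π).ncard + 2 * (excedances π).ncard := rfl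
    _ = (π ⁻¹' oddCycleMins π).ncard + 2 * (excedances π).ncard := by
      rw [Set.ncard_preimage_of_injective_subset_range π.injective (by simp)]
    _ = (excedances π ∪ π '' excedances π)ᶜ.ncard + 2 * (excedances π).ncard := by
      rw [h.preimage_oddCycleMins_eq]
    _ = Nat.card (Fin n) :=
      ncard_compl_union_image_add_two_mul_ncard π.injective h.disjoint_excedances_image
    _ = n := Nat.card_fin n
end

section
/- For all n ≥ 1 and k ≥ 1, the number of permutations π of [n] with st(π) = k equals the signless Stirling number of the first kind c(n,k), i.e., the number of permutations of [n] with exactly k cycles. -/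
open Equiv Finset

/-! Both statistics have generating function `X (X + 1) ⋯ (X + n - 1)` over the permutations of
`[n]`.

For the min/max sequence, driven by an arbitrary choice `s` of minima and maxima, write a
permutation of `[n + 1]` as a first entry followed by the standardization of the rest. If the first
entry is the extreme value asked for by `s 0`, it is picked and the sequence goes on with the rest
and the shifted `s`; each of the `n` other values is passed over, and the rest is processed with
the same `s`. As the claim for `[n]` holds for every `s`, this yields the factor `X + n`.

For cycles the same factor arises from inserting the largest element of `[n + 1]` into a
permutation of `[n]`: either as a new fixed point, or just before one of the `n` elements in its
cycle, which does not affect the cycle minima.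
-/

section Extremum

variable {α β : Type*} [LinearOrder α] [LinearOrder β]

/-- `v` is the entry of `l` that one step of a min/max sequence picks: the smallest entry if `b`
is `true` and the largest if `b` is `false`. -/
def IsExtremum (b : Bool) (l : List α) (v : α) : Prop :=
  if b then IsLeast {x | x ∈ l} v else IsGreatest {x | x ∈ l} v

lemma isExtremum_true {l : List α} {v : α} : IsExtremum true l v ↔ IsLeast {x | x ∈ l} v := by
  simp [IsExtremum]

lemma isExtremum_false {l : List α} {v : α} :
    IsExtremum false l v ↔ IsGreatest {x | x ∈ l} v := by
  simp [IsExtremum]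

lemma isLeast_foldr_min (a : α) (l : List α) : IsLeast {x | x ∈ a :: l} (l.foldr min a) := by
  induction l with
  | nil => simp
  | cons b l ih =>
    have hinsert : {x | x ∈ a :: b :: l} = insert b {x | x ∈ a :: l} := by
      ext x; simp [or_left_comm]
    exact hinsert ▸ ih.insert b

lemma isGreatest_foldr_max (a : α) (l : List α) :
    IsGreatest {x | x ∈ a :: l} (l.foldr max a) :=
  isLeast_foldr_min (α := αᵒᵈ) a l

lemma isExtremum_foldr (b : Bool) (a : α) (l : List α) :
    IsExtremum b (a :: l) (if b then (a :: l).foldr min a else (a :: l).foldr max a) := by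
  have hset : {x | x ∈ a :: a :: l} = {x | x ∈ a :: l} := by ext x; simp
  cases b
  · exact isExtremum_false.2 (hset ▸ isGreatest_foldr_max a (a :: l))
  · exact isExtremum_true.2 (hset ▸ isLeast_foldr_min a (a :: l))

namespace IsExtremum

variable {b : Bool} {l : List α} {u v : α}

lemma mem (h : IsExtremum b l v) : v ∈ l := by
  cases b
  · exact (isExtremum_false.1 h).1
  · exact (isExtremum_true.1 h).1

lemma unique (hu : IsExtremum b l u) (hv : IsExtremum b l v) : u = v := by
  cases b
  · exact (isExtremum_false.1 hu).unique (isExtremum_false.1 hv)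
  · exact (isExtremum_true.1 hu).unique (isExtremum_true.1 hv)

lemma map {f : α → β} (hf : Monotone f) (h : IsExtremum b l v) :
    IsExtremum b (l.map f) (f v) := by
  have himage : {y | y ∈ l.map f} = f '' {x | x ∈ l} := by ext y; simp
  cases b
  · exact isExtremum_false.2 (himage ▸ hf.map_isGreatest (isExtremum_false.1 h))
  · exact isExtremum_true.2 (himage ▸ hf.map_isLeast (isExtremum_true.1 h))

lemma cons_self_or_cons (h : IsExtremum b l v) (a : α) :
    IsExtremum b (a :: l) a ∨ IsExtremum b (a :: l) v := by
  have hinsert : {x | x ∈ a :: l} = insert a {x | x ∈ l} := by ext x; simp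
  cases b
  · simp only [isExtremum_false, hinsert] at h ⊢
    have hmax := h.insert a
    rcases max_choice a v with hm | hm <;> rw [hm] at hmax
    exacts [.inl hmax, .inr hmax]
  · simp only [isExtremum_true, hinsert] at h ⊢
    have hmin := h.insert a
    rcases min_choice a v with hm | hm <;> rw [hm] at hmin
    exacts [.inl hmin, .inr hmin]

end IsExtremum

lemma exists_isExtremum_append_cons (b : Bool) {l : List α} (hl : l ≠ []) :
    ∃ l₁ v l₂, l = l₁ ++ v :: l₂ ∧ v ∉ l₁ ∧ IsExtremum b l v := by
  obtain ⟨a, t, rfl⟩ := List.exists_cons_of_ne_nil hl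
  have hv := isExtremum_foldr b a t
  obtain ⟨l₁, l₂, hsplit, hv₁⟩ := List.eq_append_cons_of_mem hv.mem
  exact ⟨l₁, _, l₂, hsplit, hv₁, hv⟩

end Extremum

section MinMaxLength

variable {s : ℕ → Bool}

lemma length_tail_dropWhile_cons_le {α : Type*} (p : α → Bool) (a : α) (t : List α) :
    ((a :: t).dropWhile p).tail.length ≤ t.length := by
  have := (List.dropWhile_sublist p (l := a :: t)).length_le
  simp only [List.length_tail, List.length_cons] at this ⊢
  lia

lemma msLenAux_eq_msLen (m : ℕ) (s : ℕ → Bool) (l : List ℕ) (hm : l.length ≤ m) :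
    msLenAux m s l = msLen s l := by
  induction m using Nat.strong_induction_on generalizing s l with
  | _ m ih =>
    match m, l with
    | 0, l => obtain rfl := List.eq_nil_of_length_eq_zero (Nat.le_zero.1 hm); rfl
    | m + 1, [] => rfl
    | m + 1, a :: t =>
      have htail := length_tail_dropWhile_cons_le (α := ℕ) (a := a) (t := t)
      have ht : t.length ≤ m := by simpa using hm
      rcases ht.eq_or_lt with rfl | hlt
      · rfl
      · simp only [msLen, List.length_cons, msLenAux]
        rw [ih m m.lt_succ_self _ _ ((htail _).trans ht), ih _ (by lia) _ _ (htail _)]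

lemma msLen_nil : msLen s [] = 0 := rfl

lemma msLen_append_cons {v : ℕ} {l₁ l₂ : List ℕ} (hv : IsExtremum (s 0) (l₁ ++ v :: l₂) v)
    (hv₁ : v ∉ l₁) : msLen s (l₁ ++ v :: l₂) = msLen (fun i => s (i + 1)) l₂ + 1 := by
  have hdrop : ((l₁ ++ v :: l₂).dropWhile (· != v)).tail = l₂ := by
    rw [List.dropWhile_append_of_pos fun x hx => by simpa using ne_of_mem_of_not_mem hx hv₁]
    simp
  obtain ⟨a, t, hat⟩ := List.exists_cons_of_ne_nil (show l₁ ++ v :: l₂ ≠ [] by simp)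
  rw [hat] at hv hdrop ⊢
  have hpick := (isExtremum_foldr (s 0) a t).unique hv
  have hlen := hdrop ▸ length_tail_dropWhile_cons_le (· != v) a t
  simp only [msLen, List.length_cons, msLenAux, hpick, hdrop]
  rw [msLenAux_eq_msLen _ _ _ hlen, msLen, add_comm]

lemma msLen_cons_of_isExtremum {a : ℕ} {t : List ℕ} (h : IsExtremum (s 0) (a :: t) a) :
    msLen s (a :: t) = msLen (fun i => s (i + 1)) t + 1 :=
  msLen_append_cons (l₁ := []) h List.not_mem_nil

lemma msLen_cons_of_not_isExtremum {a : ℕ} {t : List ℕ} (h : ¬ IsExtremum (s 0) (a :: t) a) :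
    msLen s (a :: t) = msLen s t := by
  have ht : t ≠ [] := by
    rintro rfl
    exact h (by simpa using isExtremum_foldr (s 0) a [])
  obtain ⟨t₁, v, t₂, rfl, hv₁, hv⟩ := exists_isExtremum_append_cons (s 0) ht
  have hv' : IsExtremum (s 0) (a :: (t₁ ++ v :: t₂)) v := (hv.cons_self_or_cons a).resolve_left h
  have hva : v ≠ a := fun hva => h (hva ▸ hv')
  rw [msLen_append_cons hv hv₁, ← List.cons_append]
  exact msLen_append_cons hv' (by simp [hva, hv₁])

lemma msLen_map_eq_map {α : Type*} [LinearOrder α] {f g : α → ℕ} (hf : StrictMono f)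
    (hg : StrictMono g) (s : ℕ → Bool) (l : List α) : msLen s (l.map f) = msLen s (l.map g) := by
  induction hlen : l.length using Nat.strong_induction_on generalizing s l with
  | _ m ih =>
    rcases eq_or_ne l [] with rfl | hl
    · rfl
    obtain ⟨l₁, v, l₂, rfl, hv₁, hv⟩ := exists_isExtremum_append_cons (s 0) hl
    have hstep {h : α → ℕ} (hh : StrictMono h) :
        msLen s ((l₁ ++ v :: l₂).map h) = msLen (fun i => s (i + 1)) (l₂.map h) + 1 := by
      have hhv := hv.map hh.monotone
      rw [List.map_append, List.map_cons] at hhv ⊢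
      exact msLen_append_cons hhv (by simpa [hh.injective.eq_iff] using hv₁)
    have hl₂ : l₂.length < m := by
      rw [← hlen, List.length_append, List.length_cons]
      lia
    rw [hstep hf, hstep hg, ih l₂.length hl₂ _ l₂ rfl]

end MinMaxLength

section Prepend

variable {n : ℕ}

/-- The permutation of `Fin (n + 1)` whose one-line notation starts with `v` and continues with
entries in the same relative order as those of `e`. -/
def prependPerm (v : Fin (n + 1)) (e : Perm (Fin n)) : Perm (Fin (n + 1)) :=
  ((finSuccEquiv n).trans e.optionCongr).trans (finSuccEquiv' v).symm

@[simp]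
lemma prependPerm_zero (v : Fin (n + 1)) (e : Perm (Fin n)) : prependPerm v e 0 = v := by
  simp [prependPerm]

@[simp]
lemma prependPerm_succ (v : Fin (n + 1)) (e : Perm (Fin n)) (i : Fin n) :
    prependPerm v e i.succ = v.succAbove (e i) := by
  simp [prependPerm]

lemma bijective_prependPerm :
    Function.Bijective fun p : Fin (n + 1) × Perm (Fin n) => prependPerm p.1 p.2 := by
  refine (Fintype.bijective_iff_injective_and_card _).2 ⟨?_, ?_⟩
  · rintro ⟨v, e⟩ ⟨w, e'⟩ h
    obtain rfl : v = w := by simpa using DFunLike.congr_fun h 0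
    have he : e = e' := Equiv.ext fun i => by simpa using DFunLike.congr_fun h i.succ
    rw [he]
  · simp [Fintype.card_perm, Nat.factorial_succ]

lemma oneLine_prependPerm (v : Fin (n + 1)) (e : Perm (Fin n)) :
    oneLine (prependPerm v e) = (v : ℕ) :: (List.ofFn e).map fun x => (v.succAbove x : ℕ) := by
  simp [oneLine, List.ofFn_succ, List.map_ofFn, Function.comp_def]

/-- The value in `Fin (n + 1)` picked by a first step of type `b`: the smallest if `b` is `true`,
the largest if `b` is `false`. -/
def extremeValue (n : ℕ) (b : Bool) : Fin (n + 1) :=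
  if b then 0 else Fin.last n

lemma isExtremum_oneLine_iff (b : Bool) (π : Perm (Fin (n + 1))) (v : Fin (n + 1)) :
    IsExtremum b (oneLine π) v ↔ v = extremeValue n b := by
  have hextreme : IsExtremum b (List.ofFn π) (extremeValue n b) := by
    have huniv : {x | x ∈ List.ofFn π} = Set.univ :=
      Set.eq_univ_of_forall fun x => List.mem_ofFn.2 (π.surjective x)
    cases b
    · exact isExtremum_false.2 (huniv ▸ isGreatest_univ)
    · exact isExtremum_true.2 (huniv ▸ isLeast_univ)
  have hmap : oneLine π = (List.ofFn π).map Fin.val := by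
    simp [oneLine, List.map_ofFn, Function.comp_def]
  have hval : IsExtremum b (oneLine π) (extremeValue n b : ℕ) :=
    hmap ▸ hextreme.map Fin.val_strictMono.monotone
  exact ⟨fun h => Fin.ext (h.unique hval), fun h => h ▸ hval⟩

lemma msLen_map_succAbove (s : ℕ → Bool) (v : Fin (n + 1)) (e : Perm (Fin n)) :
    msLen s ((List.ofFn e).map fun x => (v.succAbove x : ℕ)) = msStat s e := by
  have hsucc : StrictMono fun x => (v.succAbove x : ℕ) :=
    Fin.val_strictMono.comp v.strictMono_succAbove
  rw [msLen_map_eq_map hsucc Fin.val_strictMono, List.map_ofFn]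
  rfl

lemma msStat_prependPerm_extremeValue (s : ℕ → Bool) (e : Perm (Fin n)) :
    msStat s (prependPerm (extremeValue n (s 0)) e) = msStat (fun i => s (i + 1)) e + 1 := by
  have h := (isExtremum_oneLine_iff (s 0) (prependPerm (extremeValue n (s 0)) e) _).2 rfl
  rw [msStat]
  rw [oneLine_prependPerm] at h ⊢
  rw [msLen_cons_of_isExtremum h, msLen_map_succAbove]

lemma msStat_prependPerm_of_ne {s : ℕ → Bool} {v : Fin (n + 1)} (hv : v ≠ extremeValue n (s 0))
    (e : Perm (Fin n)) : msStat s (prependPerm v e) = msStat s e := by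
  have h := mt (isExtremum_oneLine_iff (s 0) (prependPerm v e) v).1 hv
  rw [msStat]
  rw [oneLine_prependPerm] at h ⊢
  rw [msLen_cons_of_not_isExtremum h, msLen_map_succAbove]

end Prepend

section InsertLast

variable {n : ℕ}

/-- Inserts `Fin.last n` into the cycles of a permutation of `Fin n`: as a fixed point for `none`,
and just before `q` in the cycle of `q` for `some q`. -/
def insertLast (n : ℕ) : Option (Fin n) × Perm (Fin n) ≃ Perm (Fin (n + 1)) :=
  Equiv.Perm.decomposeOption.symm.trans (Equiv.permCongr finSuccEquivLast.symm)

lemma insertLast_none_last (e : Perm (Fin n)) :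
    insertLast n (none, e) (Fin.last n) = Fin.last n := by
  simp [insertLast, Equiv.permCongr_apply]

lemma insertLast_some_last (q : Fin n) (e : Perm (Fin n)) :
    insertLast n (some q, e) (Fin.last n) = q.castSucc := by
  simp [insertLast, Equiv.permCongr_apply]

lemma insertLast_castSucc_of_eq {o : Option (Fin n)} {e : Perm (Fin n)} {x : Fin n}
    (h : o = some (e x)) : insertLast n (o, e) x.castSucc = Fin.last n := by
  simp [insertLast, Equiv.permCongr_apply, h]

lemma insertLast_castSucc_of_ne {o : Option (Fin n)} {e : Perm (Fin n)} {x : Fin n}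
    (h : o ≠ some (e x)) : insertLast n (o, e) x.castSucc = (e x).castSucc := by
  simp [insertLast, Equiv.permCongr_apply, Equiv.swap_apply_of_ne_of_ne, h.symm]

lemma exists_insertLast_pow_castSucc_eq (o : Option (Fin n)) (e : Perm (Fin n)) (x : Fin n)
    (k : ℕ) : ∃ m : ℕ, (insertLast n (o, e) ^ m) x.castSucc = ((e ^ k) x).castSucc := by
  induction k with
  | zero => exact ⟨0, rfl⟩
  | succ k ih =>
    obtain ⟨m, hm⟩ := ih
    by_cases h : o = some (e ((e ^ k) x))
    · refine ⟨m + 2, ?_⟩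
      simp only [pow_succ', Perm.mul_apply, hm, insertLast_castSucc_of_eq h]
      rw [h, insertLast_some_last]
    · refine ⟨m + 1, ?_⟩
      simp only [pow_succ', Perm.mul_apply, hm, insertLast_castSucc_of_ne h]

lemma insertLast_pow_castSucc_eq_or (o : Option (Fin n)) (e : Perm (Fin n)) (x : Fin n) (k : ℕ) :
    ∃ j : ℕ, (insertLast n (o, e) ^ k) x.castSucc = ((e ^ j) x).castSucc ∨
      (insertLast n (o, e) ^ k) x.castSucc = Fin.last n ∧ o = some ((e ^ j) x) := by
  induction k with
  | zero => exact ⟨0, .inl rfl⟩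
  | succ k ih =>
    obtain ⟨j, hj | ⟨hj, rfl⟩⟩ := ih
    · refine ⟨j + 1, ?_⟩
      simp only [pow_succ', Perm.mul_apply, hj]
      by_cases h : o = some (e ((e ^ j) x))
      · exact .inr ⟨insertLast_castSucc_of_eq h, h⟩
      · exact .inl (insertLast_castSucc_of_ne h)
    · refine ⟨j, .inl ?_⟩
      rw [pow_succ', Perm.mul_apply, hj, insertLast_some_last]

lemma isOrbitMin_insertLast_castSucc (o : Option (Fin n)) (e : Perm (Fin n)) (x : Fin n) :
    IsOrbitMin (insertLast n (o, e)) x.castSucc ↔ IsOrbitMin e x := by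
  refine ⟨fun h k => ?_, fun h k => ?_⟩
  · obtain ⟨m, hm⟩ := exists_insertLast_pow_castSucc_eq o e x k
    exact Fin.castSucc_le_castSucc_iff.1 (hm ▸ h m)
  · obtain ⟨j, hj | ⟨hj, -⟩⟩ := insertLast_pow_castSucc_eq_or o e x k
    · exact hj ▸ Fin.castSucc_le_castSucc_iff.2 (h j)
    · exact hj ▸ Fin.le_last _

lemma isOrbitMin_insertLast_none_last (e : Perm (Fin n)) :
    IsOrbitMin (insertLast n (none, e)) (Fin.last n) := fun k =>
  (Perm.pow_apply_eq_self_of_apply_eq_self (insertLast_none_last e) k).ge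

lemma not_isOrbitMin_insertLast_some_last (q : Fin n) (e : Perm (Fin n)) :
    ¬ IsOrbitMin (insertLast n (some q, e)) (Fin.last n) := fun h =>
  (Fin.castSucc_lt_last q).not_ge (by simpa [insertLast_some_last] using h 1)

open Classical in
lemma cycleCount_insertLast (o : Option (Fin n)) (e : Perm (Fin n)) :
    cycleCount (insertLast n (o, e)) =
      cycleCount e + if IsOrbitMin (insertLast n (o, e)) (Fin.last n) then 1 else 0 := by
  simp only [cycleCount, Nat.card_eq_fintype_card, Fintype.card_subtype, Finset.card_filter,
    Fin.sum_univ_castSucc, isOrbitMin_insertLast_castSucc]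

lemma cycleCount_insertLast_none (e : Perm (Fin n)) :
    cycleCount (insertLast n (none, e)) = cycleCount e + 1 := by
  rw [cycleCount_insertLast, if_pos (isOrbitMin_insertLast_none_last e)]

lemma cycleCount_insertLast_some (q : Fin n) (e : Perm (Fin n)) :
    cycleCount (insertLast n (some q, e)) = cycleCount e := by
  rw [cycleCount_insertLast, if_neg (not_isOrbitMin_insertLast_some_last q e), add_zero]

end InsertLast

section GeneratingFunctions

open Polynomial

lemma coeff_sum_X_pow {R α : Type*} [Semiring R] [Fintype α] (f : α → ℕ) (k : ℕ) :
    (∑ a, (X : R[X]) ^ f a).coeff k = Nat.card {a // f a = k} := by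
  classical
  simp [coeff_X_pow, Finset.sum_boole, Nat.card_eq_fintype_card,
    Fintype.card_subtype, eq_comm]

theorem sum_X_pow_msStat (n : ℕ) (s : ℕ → Bool) :
    ∑ π : Perm (Fin n), X ^ msStat s π = ascPochhammer ℕ n := by
  induction n generalizing s with
  | zero => simp [msStat, oneLine, msLen_nil]
  | succ n ih =>
    calc ∑ π : Perm (Fin (n + 1)), (X : ℕ[X]) ^ msStat s π
        = ∑ v, ∑ e : Perm (Fin n), X ^ msStat s (prependPerm v e) := by
          rw [← bijective_prependPerm.sum_comp, Fintype.sum_prod_type]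
      _ = ∑ e : Perm (Fin n), X ^ (msStat (fun i => s (i + 1)) e + 1) +
            ∑ _v : Fin n, ∑ e : Perm (Fin n), X ^ msStat s e := by
          simp only [Fin.sum_univ_succAbove _ (extremeValue n (s 0)),
            msStat_prependPerm_extremeValue, msStat_prependPerm_of_ne (Fin.succAbove_ne _ _)]
      _ = ascPochhammer ℕ n * (X + (n : ℕ[X])) := by
          simp [pow_succ, ← Finset.sum_mul, ih, mul_add, Nat.cast_comm]
      _ = ascPochhammer ℕ (n + 1) := (ascPochhammer_succ_right ℕ n).symm

theorem sum_X_pow_cycleCount (n : ℕ) :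
    ∑ π : Perm (Fin n), X ^ cycleCount π = ascPochhammer ℕ n := by
  induction n with
  | zero => simp [cycleCount]
  | succ n ih =>
    calc ∑ π : Perm (Fin (n + 1)), (X : ℕ[X]) ^ cycleCount π
        = ∑ o, ∑ e : Perm (Fin n), X ^ cycleCount (insertLast n (o, e)) := by
          rw [← (insertLast n).sum_comp, Fintype.sum_prod_type]
      _ = ∑ e : Perm (Fin n), X ^ (cycleCount e + 1) +
            ∑ _q : Fin n, ∑ e : Perm (Fin n), X ^ cycleCount e := by
          simp only [Fintype.sum_option, cycleCount_insertLast_none, cycleCount_insertLast_some]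
      _ = ascPochhammer ℕ n * (X + (n : ℕ[X])) := by
          simp [pow_succ, ← Finset.sum_mul, ih, mul_add, Nat.cast_comm]
      _ = ascPochhammer ℕ (n + 1) := (ascPochhammer_succ_right ℕ n).symm

theorem stmt14_general (s : ℕ → Bool) (n k : ℕ) :
    Nat.card {π : Perm (Fin n) // msStat s π = k} =
      Nat.card {π : Perm (Fin n) // cycleCount π = k} := by
  have hcoeff := congrArg (coeff · k) ((sum_X_pow_msStat n s).trans (sum_X_pow_cycleCount n).symm)
  simpa only [coeff_sum_X_pow, Nat.cast_id] using hcoeff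

end GeneratingFunctions

/-- `st` is distributed like the number of cycles (Stirling numbers). -/
theorem stmt14 (n k : ℕ) (hn : 1 ≤ n) (hk : 1 ≤ k) :
    Nat.card {π : Equiv.Perm (Fin n) // stStat π = k} =
      Nat.card {π : Equiv.Perm (Fin n) // cycleCount π = k} := by
  exact stmt14_general _ n k
end

section
/- For all n ≥ 2 and k ≥ 1 with n ≥ k + 1, the number of permutations π of [n] with extr(π) = k equals 2^k · c(n−1, k), where c(n−1, k) is the signless Stirling number of the first kind. -/
open Equiv Finset

/-!
Delete the last entry of a permutation of `[n + 2]` and standardize what is left. The positions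
`≤ n + 1` keep their extremeness, and the last entry is extreme exactly if it is the smallest or the
largest of the `n + 2` values, so `∑ X ^ extr π` gains the factor `2X + n`. Likewise, removing the
largest element of `[n + 1]` from its cycle loses a cycle exactly if that element is a fixed point,
so `∑ X ^ cyc π` gains the factor `X + n`. Hence the first generating polynomial is the second one,
the rising factorial `X (X + 1) ⋯ (X + n - 1)`, evaluated at `2X`.
-/

open Polynomial

section GeneratingPolynomial

variable {α β γ : Type*} [Fintype α] [Fintype β] [Fintype γ]

/-- The generating polynomial `∑ a, X ^ s a` of a statistic `s` on a finite type; its coefficients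
count the elements with a given value of `s`. -/
noncomputable def genPoly (s : α → ℕ) : ℕ[X] :=
  ∑ a, X ^ s a

lemma coeff_genPoly (s : α → ℕ) (k : ℕ) : (genPoly s).coeff k = Nat.card {a // s a = k} := by
  simp only [genPoly, finsetSum_coeff, coeff_X_pow, @eq_comm ℕ k, sum_boole, Nat.cast_id,
    Nat.card_eq_fintype_card, Fintype.card_subtype]

lemma genPoly_of_equiv_prod (e : β × γ ≃ α) {s : α → ℕ} {t : β → ℕ} {u : γ → ℕ}
    (h : ∀ b c, s (e (b, c)) = t b + u c) : genPoly s = genPoly t * genPoly u := by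
  simp only [genPoly, ← e.sum_comp, Fintype.sum_prod_type, h, pow_add, sum_mul_sum]

end GeneratingPolynomial

lemma genPoly_indicator_last (n : ℕ) :
    genPoly (fun v : Fin (n + 1) => if v = Fin.last n then 1 else 0) = X + (n : ℕ[X]) := by
  simp [genPoly, Fin.sum_univ_castSucc, add_comm]

lemma genPoly_indicator_zero_or_last (n : ℕ) :
    genPoly (fun v : Fin (n + 2) => if v = 0 ∨ v = Fin.last (n + 1) then 1 else 0) =
      C 2 * X + (n : ℕ[X]) := by
  calc genPoly (fun v : Fin (n + 2) => if v = 0 ∨ v = Fin.last (n + 1) then 1 else 0)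
      = X + ((n : ℕ[X]) + X) := by
        rw [genPoly, Fin.sum_univ_succ, Fin.sum_univ_castSucc]
        simp
    _ = C 2 * X + (n : ℕ[X]) := by
        rw [map_ofNat]
        ring

lemma card_subtype_fin_succ {n : ℕ} (P : Fin (n + 1) → Prop) [Decidable (P (Fin.last n))] :
    Nat.card {i // P i} =
      (if P (Fin.last n) then 1 else 0) + Nat.card {i : Fin n // P i.castSucc} := by
  classical
  simp only [Nat.card_eq_fintype_card, Fintype.card_subtype, card_filter, Fin.sum_univ_castSucc]
  rw [add_comm]
  congr

section Extreme

variable {n : ℕ}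

/-- The entry of `π` in position `i` is an extreme element; position `0` does not count. -/
def IsExtremeAt (π : Perm (Fin n)) (i : Fin n) : Prop :=
  (i : ℕ) ≠ 0 ∧ ((∀ j, j < i → π i < π j) ∨ (∀ j, j < i → π j < π i))

/-- The bijection sending `(v, σ)` to the permutation with last entry `v` whose other entries
form the pattern `σ`. -/
def appendEntry : Fin (n + 1) × Perm (Fin n) ≃ Perm (Fin (n + 1)) where
  toFun x := (finSuccEquivLast.trans x.2.optionCongr).trans (finSuccEquiv' x.1).symm
  invFun π := (π (Fin.last n),
    removeNone ((finSuccEquivLast.symm.trans π).trans (finSuccEquiv' (π (Fin.last n)))))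
  left_inv := fun ⟨v, σ⟩ => by
    have hσ : (finSuccEquivLast.symm.trans ((finSuccEquivLast.trans σ.optionCongr).trans
        (finSuccEquiv' v).symm)).trans (finSuccEquiv' v) = σ.optionCongr := by
      ext1
      simp
    simp [hσ]
  right_inv π := by
    ext1 i
    simp

lemma appendEntry_last (v : Fin (n + 1)) (σ : Perm (Fin n)) :
    appendEntry (v, σ) (Fin.last n) = v := by
  simp [appendEntry]

lemma appendEntry_castSucc (v : Fin (n + 1)) (σ : Perm (Fin n)) (i : Fin n) :
    appendEntry (v, σ) i.castSucc = v.succAbove (σ i) := by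
  simp [appendEntry]

lemma forall_lt_apply_last_lt_iff (π : Perm (Fin (n + 1))) :
    (∀ j, j < Fin.last n → π (Fin.last n) < π j) ↔ π (Fin.last n) = 0 := by
  refine ⟨fun h => ?_, fun h j hj => ?_⟩
  · by_contra hne
    have hlt : π.symm 0 < Fin.last n :=
      Fin.lt_last_iff_ne_last.2 fun h0 => hne (π.symm_apply_eq.1 h0).symm
    simpa using h _ hlt
  · rw [h, Fin.pos_iff_ne_zero, ← h]
    exact π.injective.ne hj.ne

lemma forall_lt_apply_lt_last_iff (π : Perm (Fin (n + 1))) :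
    (∀ j, j < Fin.last n → π j < π (Fin.last n)) ↔ π (Fin.last n) = Fin.last n := by
  simpa [Fin.rev_eq_iff] using forall_lt_apply_last_lt_iff (π.trans Fin.revPerm)

lemma isExtremeAt_appendEntry_castSucc (v : Fin (n + 1)) (σ : Perm (Fin n)) (i : Fin n) :
    IsExtremeAt (appendEntry (v, σ)) i.castSucc ↔ IsExtremeAt σ i := by
  simp only [IsExtremeAt, Fin.forall_fin_succ', appendEntry_castSucc,
    Fin.succAbove_lt_succAbove_iff, Fin.castSucc_lt_castSucc_iff, (Fin.castSucc_lt_last i).not_gt,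
    Fin.val_castSucc, false_imp_iff, and_true]

lemma isExtremeAt_last_iff (π : Perm (Fin (n + 2))) :
    IsExtremeAt π (Fin.last (n + 1)) ↔
      π (Fin.last (n + 1)) = 0 ∨ π (Fin.last (n + 1)) = Fin.last (n + 1) := by
  rw [IsExtremeAt, forall_lt_apply_last_lt_iff, forall_lt_apply_lt_last_iff]
  exact and_iff_right n.succ_ne_zero

lemma extrCount_appendEntry (v : Fin (n + 2)) (σ : Perm (Fin (n + 1))) :
    extrCount (appendEntry (v, σ)) =
      (if v = 0 ∨ v = Fin.last (n + 1) then 1 else 0) + extrCount σ := by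
  classical
  calc extrCount (appendEntry (v, σ))
      = Nat.card {i // IsExtremeAt (appendEntry (v, σ)) i} := rfl
    _ = (if v = 0 ∨ v = Fin.last (n + 1) then 1 else 0) + Nat.card {i // IsExtremeAt σ i} := by
        simp only [card_subtype_fin_succ, isExtremeAt_appendEntry_castSucc, isExtremeAt_last_iff,
          appendEntry_last]
    _ = (if v = 0 ∨ v = Fin.last (n + 1) then 1 else 0) + extrCount σ := rfl

lemma genPoly_extrCount (n : ℕ) :
    genPoly (fun π : Perm (Fin (n + 1)) => extrCount π) =
      (ascPochhammer ℕ n).comp (C 2 * X) := by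
  induction n with
  | zero => simp [genPoly, extrCount]
  | succ n ih =>
    rw [genPoly_of_equiv_prod appendEntry extrCount_appendEntry, genPoly_indicator_zero_or_last,
      ih, ascPochhammer_succ_right, mul_comp, add_comp, X_comp, natCast_comp, mul_comm]

end Extreme

section Cycle

variable {n : ℕ}

/-- The bijection sending `(v, σ)` to the permutation obtained from `σ` by inserting the new
largest element `Fin.last n` into the cycle of `v`, just before `v`, or as a fixed point if
`v = Fin.last n`. -/
def insertIntoCycle : Fin (n + 1) × Perm (Fin n) ≃ Perm (Fin (n + 1)) :=
  ((finSuccEquivLast.prodCongr (.refl _)).trans Perm.decomposeOption.symm).trans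
    finSuccEquivLast.symm.permCongr

lemma insertIntoCycle_last (v : Fin (n + 1)) (σ : Perm (Fin n)) :
    insertIntoCycle (v, σ) (Fin.last n) = v := by
  simp [insertIntoCycle]

lemma insertIntoCycle_castSucc_of_eq {v : Fin (n + 1)} {σ : Perm (Fin n)} {i : Fin n}
    (h : v = (σ i).castSucc) : insertIntoCycle (v, σ) i.castSucc = Fin.last n := by
  simp [insertIntoCycle, h]

lemma insertIntoCycle_castSucc_of_ne {v : Fin (n + 1)} {σ : Perm (Fin n)} {i : Fin n}
    (h : v ≠ (σ i).castSucc) : insertIntoCycle (v, σ) i.castSucc = (σ i).castSucc := by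
  have hne : some (σ i) ≠ finSuccEquivLast v := fun h' =>
    h (by simpa using congrArg finSuccEquivLast.symm h'.symm)
  simp [insertIntoCycle, swap_apply_of_ne_of_ne (Option.some_ne_none _) hne]

lemma exists_pow_insertIntoCycle_castSucc_eq (v : Fin (n + 1)) (σ : Perm (Fin n)) (x : Fin n)
    (k : ℕ) :
    ∃ l, (insertIntoCycle (v, σ) ^ l) x.castSucc = ((σ ^ k) x).castSucc := by
  induction k with
  | zero => exact ⟨0, rfl⟩
  | succ k ih =>
    obtain ⟨l, hl⟩ := ih
    simp only [pow_succ', Perm.mul_apply]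
    by_cases hv : v = (σ ((σ ^ k) x)).castSucc
    · refine ⟨l + 2, ?_⟩
      rw [pow_succ', pow_succ', Perm.mul_apply, Perm.mul_apply, hl,
        insertIntoCycle_castSucc_of_eq hv, insertIntoCycle_last, hv]
    · refine ⟨l + 1, ?_⟩
      rw [pow_succ', Perm.mul_apply, hl, insertIntoCycle_castSucc_of_ne hv]

-- Recording the value of `v` when the orbit is at `Fin.last n` lets the induction step past it.
lemma pow_insertIntoCycle_castSucc_eq_or (v : Fin (n + 1)) (σ : Perm (Fin n)) (x : Fin n) (k : ℕ) :
    ∃ l, (insertIntoCycle (v, σ) ^ k) x.castSucc = ((σ ^ l) x).castSucc ∨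
      (insertIntoCycle (v, σ) ^ k) x.castSucc = Fin.last n ∧ v = ((σ ^ l) x).castSucc := by
  induction k with
  | zero => exact ⟨0, .inl rfl⟩
  | succ k ih =>
    simp only [pow_succ' _ k, Perm.mul_apply]
    obtain ⟨l, hl | ⟨hl, hv⟩⟩ := ih
    · refine ⟨l + 1, ?_⟩
      rw [hl, pow_succ', Perm.mul_apply]
      by_cases hv : v = (σ ((σ ^ l) x)).castSucc
      · exact .inr ⟨insertIntoCycle_castSucc_of_eq hv, hv⟩
      · exact .inl (insertIntoCycle_castSucc_of_ne hv)
    · exact ⟨l, .inl (by rw [hl, insertIntoCycle_last, hv])⟩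

lemma isOrbitMin_insertIntoCycle_castSucc (v : Fin (n + 1)) (σ : Perm (Fin n)) (x : Fin n) :
    IsOrbitMin (insertIntoCycle (v, σ)) x.castSucc ↔ IsOrbitMin σ x := by
  refine ⟨fun h k => ?_, fun h k => ?_⟩
  · obtain ⟨l, hl⟩ := exists_pow_insertIntoCycle_castSucc_eq v σ x k
    exact Fin.castSucc_le_castSucc_iff.1 (hl ▸ h l)
  · obtain ⟨l, hl | ⟨hl, -⟩⟩ := pow_insertIntoCycle_castSucc_eq_or v σ x k
    · exact hl ▸ Fin.castSucc_le_castSucc_iff.2 (h l)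
    · exact hl ▸ Fin.le_last _

lemma isOrbitMin_last_iff (π : Perm (Fin (n + 1))) :
    IsOrbitMin π (Fin.last n) ↔ π (Fin.last n) = Fin.last n :=
  ⟨fun h => Fin.last_le_iff.1 (h 1), fun h k => (Perm.pow_apply_eq_self_of_apply_eq_self h k).ge⟩

lemma cycleCount_insertIntoCycle (v : Fin (n + 1)) (σ : Perm (Fin n)) :
    cycleCount (insertIntoCycle (v, σ)) = (if v = Fin.last n then 1 else 0) + cycleCount σ := by
  classical
  simp only [cycleCount, card_subtype_fin_succ, isOrbitMin_insertIntoCycle_castSucc,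
    isOrbitMin_last_iff, insertIntoCycle_last]

lemma genPoly_cycleCount (n : ℕ) :
    genPoly (fun π : Perm (Fin n) => cycleCount π) = ascPochhammer ℕ n := by
  induction n with
  | zero => simp [genPoly, cycleCount]
  | succ n ih =>
    rw [genPoly_of_equiv_prod insertIntoCycle cycleCount_insertIntoCycle, genPoly_indicator_last,
      ih, ascPochhammer_succ_right, mul_comm]

end Cycle

/-- permutations of `[n]` with `k` extreme elements are counted by
`2^k c(n-1, k)`. -/
theorem stmt16 (n k : ℕ) (hn : 2 ≤ n) (hk : 1 ≤ k) (hkn : k + 1 ≤ n) :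
    Nat.card {π : Equiv.Perm (Fin n) // extrCount π = k} =
      2 ^ k * Nat.card {π : Equiv.Perm (Fin (n - 1)) // cycleCount π = k} := by
  obtain ⟨m, rfl⟩ : ∃ m, n = m + 1 := Nat.exists_eq_add_one.2 (by omega)
  rw [Nat.add_sub_cancel, ← coeff_genPoly, ← coeff_genPoly, genPoly_extrCount, genPoly_cycleCount,
    comp_C_mul_X_coeff, mul_comm]
end

section
/- For every n ≥ 1 and every k with 1 ≤ k ≤ n, the total number, summed over all permutations π of [n], of up-down cycles of π of length k equals n! · E_{k-1} / k!; equivalently, the expected number of up-down cycles of length k in a uniformly random permutation of [n] is E_{k-1}/k!. -/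
open Equiv Finset

/-!
Write a cycle of length `k` as the word `x, π x, …, π^(k-1) x` starting at its smallest element, and
count pairs (word, permutation) in the other order. A given word of `k` distinct letters is a cycle
of exactly `(n - k)!` permutations. A word is determined by its set of letters (`n.choose k`
choices) and its pattern in `S_k`, so it remains to count the up-down patterns starting with their
minimum. Deleting that minimum leaves a down-up pattern of length `k - 1`, and complementation turns
it into an up-down one: there are `E_{k-1}` of them, and `n.choose k * E_{k-1} * (n - k)!` is the
claim.
-/

open Function

variable {α β : Type*}

section Words

variable {m k : ℕ}

/-- The word `w 0, w 1, …, w (k - 1)` is up-down: `w 0 < w 1 > w 2 < ⋯`. This is `IsUpDownPerm` for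
words over an arbitrary alphabet. -/
def IsUpDown [LT α] (w : Fin k → α) : Prop :=
  ∀ i j : Fin k, (j : ℕ) = (i : ℕ) + 1 →
    (((i : ℕ) % 2 = 0 → w i < w j) ∧ ((i : ℕ) % 2 = 1 → w j < w i))

/-- The word `w` is up-down and starts with its smallest letter, as does the standard form of an
up-down cycle. -/
def IsMinUpDown [Preorder α] (w : Fin (m + 1) → α) : Prop :=
  (∀ i, w 0 ≤ w i) ∧ IsUpDown w

theorem isUpDown_orderEmbedding_comp [Preorder α] [Preorder β] (e : α ↪o β) (w : Fin k → α) :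
    IsUpDown (e ∘ w) ↔ IsUpDown w := by
  simp only [IsUpDown, comp_apply, e.lt_iff_lt]

theorem isMinUpDown_orderEmbedding_comp [Preorder α] [Preorder β] (e : α ↪o β)
    (w : Fin (m + 1) → α) : IsMinUpDown (e ∘ w) ↔ IsMinUpDown w := by
  simp only [IsMinUpDown, isUpDown_orderEmbedding_comp, comp_apply, e.le_iff_le]

theorem isUpDown_iff_toDual_tail [Preorder α] {w : Fin (m + 1) → α}
    (hw : ∀ i : Fin m, w 0 < w i.succ) :
    IsUpDown w ↔ IsUpDown (OrderDual.toDual ∘ Fin.tail w) := by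
  simp only [IsUpDown, Fin.forall_fin_succ, Fin.val_zero, Fin.val_succ, comp_apply, Fin.tail,
    OrderDual.toDual_lt_toDual]
  constructor
  · rintro ⟨-, h⟩ i j hij
    have := (h i).2 j (by omega)
    exact ⟨fun hi => this.2 (by omega), fun hi => this.1 (by omega)⟩
  · intro h
    refine ⟨⟨by simp, fun j _ => ⟨fun _ => hw j, by simp⟩⟩, fun i => ⟨by simp, fun j hij => ?_⟩⟩
    have := h i j (by omega)
    exact ⟨fun hi => this.2 (by omega), fun hi => this.1 (by omega)⟩

theorem isUpDownPerm_trans_revPerm_iff (τ : Perm (Fin m)) :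
    IsUpDownPerm (τ.trans Fin.revPerm) ↔ IsUpDown (OrderDual.toDual ∘ τ) :=
  isUpDown_orderEmbedding_comp Fin.revOrderIso.toOrderEmbedding (OrderDual.toDual ∘ τ)

theorem isMinUpDown_decomposeFin_symm_iff (p : Fin (m + 1)) (τ : Perm (Fin m)) :
    IsMinUpDown (Perm.decomposeFin.symm (p, τ)) ↔
      p = 0 ∧ IsUpDownPerm (τ.trans Fin.revPerm) := by
  have minimum_first : (∀ i, Perm.decomposeFin.symm (p, τ) 0 ≤ Perm.decomposeFin.symm (p, τ) i) ↔
      p = 0 := by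
    refine ⟨fun h => ?_, fun hp i => by simp [hp]⟩
    simpa using h ((Perm.decomposeFin.symm (p, τ)).symm 0)
  rw [IsMinUpDown, minimum_first, and_congr_right_iff, isUpDownPerm_trans_revPerm_iff]
  rintro rfl
  have tail_eq : Fin.tail (Perm.decomposeFin.symm (0, τ)) = Fin.succ ∘ τ := by
    ext i
    simp [Fin.tail]
  rw [isUpDown_iff_toDual_tail (by simp), tail_eq]
  exact isUpDown_orderEmbedding_comp (Fin.succOrderEmb m).dual (OrderDual.toDual ∘ τ)

theorem card_perm_isMinUpDown (m : ℕ) :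
    Nat.card {σ : Perm (Fin (m + 1)) // IsMinUpDown σ} = eulerE m := by
  let complement : Perm (Perm (Fin m)) := Equiv.mulLeft Fin.revPerm
  calc Nat.card {σ : Perm (Fin (m + 1)) // IsMinUpDown σ}
      = Nat.card {q : Fin (m + 1) × Perm (Fin m) // q.1 = 0 ∧ IsUpDownPerm (complement q.2)} :=
        Nat.card_congr (Perm.decomposeFin.symm.subtypeEquiv fun q =>
          (isMinUpDown_decomposeFin_symm_iff q.1 q.2).symm).symm
    _ = Nat.card {p : Fin (m + 1) // p = 0} *
          Nat.card {τ : Perm (Fin m) // IsUpDownPerm (complement τ)} := by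
        rw [Nat.card_congr (Equiv.subtypeProdEquivProd (p := (· = 0))
          (q := fun τ => IsUpDownPerm (complement τ))), Nat.card_prod]
    _ = eulerE m := by
        rw [Nat.card_unique, one_mul, eulerE]
        exact Nat.card_congr (complement.subtypeEquiv fun _ => Iff.rfl)

end Words

section Patterns

variable [LinearOrder α] {k : ℕ}

theorem sort_orderEmbedding_comp_perm (e : Fin k ↪o α) (σ : Perm (Fin k)) :
    Tuple.sort (e ∘ σ) = σ⁻¹ := by
  refine (Tuple.eq_sort_iff.2 ⟨?_, fun i j hij h => ?_⟩).symm
  · simpa [comp_assoc] using e.monotone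
  · exact absurd (by simpa using h) hij.ne

/-- A word without repeated letters amounts to its set of letters, listed increasingly, and its
pattern (its standardization), a permutation of the positions. -/
def embeddingEquivOrderEmbeddingProdPerm : (Fin k ↪ α) ≃ (Fin k ↪o α) × Perm (Fin k) where
  toFun w := (OrderEmbedding.ofStrictMono (w ∘ Tuple.sort w)
    ((Tuple.monotone_sort w).strictMono_of_injective
      (w.injective.comp (Tuple.sort w).injective)), (Tuple.sort w)⁻¹)
  invFun p := p.2.toEmbedding.trans p.1.toEmbedding
  left_inv w := by
    ext i
    simp
  right_inv p := by
    obtain ⟨e, σ⟩ := p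
    have sort_eq : Tuple.sort (σ.toEmbedding.trans e.toEmbedding) = σ⁻¹ :=
      sort_orderEmbedding_comp_perm e σ
    refine Prod.ext ?_ ?_
    · ext i
      simp [sort_eq]
    · simp [sort_eq]

theorem card_orderEmbedding_fin : Nat.card (Fin k ↪o α) = (Nat.card α).choose k := by
  rw [Nat.card_congr Set.powersetCard.ofFinEmbEquiv, Set.powersetCard.card]

theorem card_embedding_eq_choose_mul_card_perm {P : (Fin k → α) → Prop}
    {Q : (Fin k → Fin k) → Prop} (hPQ : ∀ (e : Fin k ↪o α) (σ : Perm (Fin k)), P (e ∘ σ) ↔ Q σ) :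
    Nat.card {w : Fin k ↪ α // P w} =
      (Nat.card α).choose k * Nat.card {σ : Perm (Fin k) // Q σ} := by
  rw [← card_orderEmbedding_fin, ← Nat.card_prod]
  calc Nat.card {w : Fin k ↪ α // P w}
      = Nat.card {p : (Fin k ↪o α) × Perm (Fin k) // Q p.2} :=
        Nat.card_congr (embeddingEquivOrderEmbeddingProdPerm.symm.subtypeEquiv fun p =>
          (hPQ p.1 p.2).symm).symm
    _ = Nat.card ((Fin k ↪o α) × {σ : Perm (Fin k) // Q σ}) :=
        Nat.card_congr ((Equiv.subtypeProdEquivSigmaSubtype fun _ (σ : Perm (Fin k)) => Q σ).trans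
          (Equiv.sigmaEquivProd _ _))

theorem card_embedding_isMinUpDown (m : ℕ) :
    Nat.card {w : Fin (m + 1) ↪ α // IsMinUpDown w} =
      (Nat.card α).choose (m + 1) * eulerE m := by
  rw [card_embedding_eq_choose_mul_card_perm (Q := IsMinUpDown)
    fun e σ => isMinUpDown_orderEmbedding_comp e σ, card_perm_isMinUpDown]

end Patterns

section CycleWords

open scoped Fin.CommRing

variable {m : ℕ} {f : α → α} {w : Fin (m + 1) → α}

theorem iterate_apply_zero_of_semiconj (h : Semiconj w (finRotate (m + 1)) f) (i : ℕ) :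
    f^[i] (w 0) = w i := by
  have finRotate_eq : ⇑(finRotate (m + 1)) = (· + 1) := funext finRotate_apply
  rw [← (h.iterate_right i).eq, finRotate_eq, add_right_iterate]
  simp

theorem minimalPeriod_apply_zero_of_semiconj (hw : Injective w)
    (h : Semiconj w (finRotate (m + 1)) f) : minimalPeriod f (w 0) = m + 1 := by
  refine Nat.dvd_right_iff_eq.1 fun i => ?_
  rw [← isPeriodicPt_iff_minimalPeriod_dvd, IsPeriodicPt, IsFixedPt,
    iterate_apply_zero_of_semiconj h, hw.eq_iff, Fin.natCast_eq_zero]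

theorem injective_iterate_of_minimalPeriod_eq {x : α} {k : ℕ} (hx : minimalPeriod f x = k) :
    Injective fun i : Fin k => f^[i] x := fun i j hij =>
  Fin.ext (iterate_injOn_Iio_minimalPeriod (hx ▸ i.2) (hx ▸ j.2) hij)

theorem semiconj_iterate_of_minimalPeriod_eq {x : α} (hx : minimalPeriod f x = m + 1) :
    Semiconj (fun i : Fin (m + 1) => f^[i] x) (finRotate (m + 1)) f := fun i => by
  have val_succ : ((finRotate (m + 1) i : Fin (m + 1)) : ℕ) = (i + 1) % (m + 1) := by
    simp [Fin.val_add]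
  have iterate_mod (j : ℕ) : f^[j % (m + 1)] x = f^[j] x := hx ▸ iterate_mod_minimalPeriod_eq
  simp only [val_succ, iterate_mod, iterate_succ_apply']

/-- The points on cycles of length `m + 1` of `f` whose cycle, read from that point, is a word
satisfying `P` correspond to the words satisfying `P` which `f` permutes cyclically. -/
def periodicPtEquivCycleWord (f : α → α) (P : (Fin (m + 1) → α) → Prop) :
    {x // minimalPeriod f x = m + 1 ∧ P fun i => f^[i] x} ≃
      {w : {w : Fin (m + 1) ↪ α // P w} // Semiconj w (finRotate (m + 1)) f} where
  toFun x := ⟨⟨⟨_, injective_iterate_of_minimalPeriod_eq x.2.1⟩, x.2.2⟩,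
    semiconj_iterate_of_minimalPeriod_eq x.2.1⟩
  invFun w := ⟨w.1.1 0, minimalPeriod_apply_zero_of_semiconj w.1.1.injective w.2, by
    simpa only [iterate_apply_zero_of_semiconj w.2, Fin.cast_val_eq_self] using w.1.2⟩
  left_inv _ := rfl
  right_inv w := by
    ext i
    simp [iterate_apply_zero_of_semiconj w.2]

end CycleWords

theorem card_perm_semiconj [Finite α] (w : β ↪ α) (σ : Perm β) :
    Nat.card {π : Perm α // Semiconj w σ π} = (Nat.card α - Nat.card β).factorial := by
  classical
  have := Fintype.ofFinite α
  have := Fintype.ofInjective w w.injective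
  let σ' : Perm α := σ.viaFintypeEmbedding w
  have semiconj_iff_fixes_range (π : Perm α) :
      Semiconj w σ π ↔ ∀ a, ¬ a ∉ Set.range w → (σ'⁻¹ * π) a = a := by
    simp only [not_not, Set.forall_mem_range, Perm.mul_apply, Perm.inv_eq_iff_eq, σ',
      Perm.viaFintypeEmbedding_apply_image]
    exact forall_congr' fun _ => eq_comm
  let e : {π : Perm α // Semiconj w σ π} ≃ Perm {a // a ∉ Set.range w} :=
    ((Equiv.mulLeft σ'⁻¹).subtypeEquiv semiconj_iff_fixes_range).trans
      (Perm.subtypeEquivSubtypePerm _).symm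
  rw [Nat.card_congr e, Nat.card_perm, ← Nat.card_range_of_injective w.injective]
  simp only [Nat.card_eq_fintype_card]
  rw [Fintype.card_subtype_compl]

theorem sum_card_comm [Fintype α] [Fintype β] (r : α → β → Prop) :
    ∑ a, Nat.card {b // r a b} = ∑ b, Nat.card {a // r a b} := by
  classical
  simp only [Nat.card_eq_fintype_card, Fintype.card_subtype]
  exact sum_card_bipartiteAbove_eq_sum_card_bipartiteBelow r

theorem sum_card_minimalPeriod_eq_and [Fintype α] [DecidableEq α] {m : ℕ}
    (P : (Fin (m + 1) → α) → Prop) :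
    ∑ π : Perm α, Nat.card {x // minimalPeriod π x = m + 1 ∧ P fun i => π^[i] x} =
      Nat.card {w : Fin (m + 1) ↪ α // P w} * (Nat.card α - (m + 1)).factorial := by
  classical
  calc ∑ π : Perm α, Nat.card {x // minimalPeriod π x = m + 1 ∧ P fun i => π^[i] x}
      = ∑ π : Perm α, Nat.card {w : {w : Fin (m + 1) ↪ α // P w} //
          Semiconj w (finRotate (m + 1)) π} :=
        sum_congr rfl fun π _ => Nat.card_congr (periodicPtEquivCycleWord π P)
    _ = ∑ w : {w : Fin (m + 1) ↪ α // P w},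
          Nat.card {π : Perm α // Semiconj w (finRotate (m + 1)) π} := sum_card_comm _
    _ = Nat.card {w : Fin (m + 1) ↪ α // P w} * (Nat.card α - (m + 1)).factorial := by
        simp only [card_perm_semiconj, sum_const, card_univ, ← Nat.card_eq_fintype_card,
          smul_eq_mul, Nat.card_fin]

section UpDownCycles

variable {n m : ℕ} {π : Perm (Fin n)} {x : Fin n}

theorem isOrbitMin_iff_forall_fin (hx : cycLen π x = m + 1) :
    IsOrbitMin π x ↔ ∀ i : Fin (m + 1), x ≤ π^[i] x := by
  simp only [IsOrbitMin, ← Perm.iterate_eq_pow]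
  refine ⟨fun h i => h i, fun h i => ?_⟩
  have iterate_mod : π^[i % (m + 1)] x = π^[i] x := hx ▸ iterate_mod_minimalPeriod_eq
  exact iterate_mod ▸ h ⟨i % (m + 1), Nat.mod_lt i m.succ_pos⟩

theorem cycleUpDownAt_iff_isUpDown (hx : cycLen π x = m + 1) :
    CycleUpDownAt π x ↔ IsUpDown fun i : Fin (m + 1) => π^[i] x := by
  simp only [CycleUpDownAt, IsUpDown, ← Perm.iterate_eq_pow, hx]
  refine ⟨fun h i j hij => ?_, fun h i hi => h ⟨i, by omega⟩ ⟨i + 1, hi⟩ rfl⟩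
  simpa only [hij] using h i (hij ▸ j.2)

theorem udLenCount_eq_card_isMinUpDown (π : Perm (Fin n)) (m : ℕ) :
    udLenCount π (m + 1) =
      Nat.card {x // minimalPeriod π x = m + 1 ∧ IsMinUpDown fun i : Fin (m + 1) => π^[i] x} := by
  refine Nat.card_congr (Equiv.subtypeEquivRight fun x => ?_)
  rw [and_left_comm]
  exact and_congr_right fun hx =>
    and_congr (isOrbitMin_iff_forall_fin hx) (cycleUpDownAt_iff_isUpDown hx)

end UpDownCycles

theorem sum_udLenCount (n m : ℕ) :
    ∑ π : Perm (Fin n), udLenCount π (m + 1) =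
      n.choose (m + 1) * eulerE m * (n - (m + 1)).factorial := by
  simp only [udLenCount_eq_card_isMinUpDown]
  rw [sum_card_minimalPeriod_eq_and IsMinUpDown, card_embedding_isMinUpDown, Nat.card_fin]

/-- the total number of up-down cycles of length `k` over all
permutations of `[n]` equals `n! · E (k-1) / k!`. -/
theorem stmt17 (n k : ℕ) (hn : 1 ≤ n) (hk : 1 ≤ k) (hkn : k ≤ n) :
    (∑ π : Equiv.Perm (Fin n), (udLenCount π k : ℚ)) =
      (Nat.factorial n : ℚ) * (eulerE (k - 1) : ℚ) / (Nat.factorial k : ℚ) := by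
  obtain ⟨m, rfl⟩ : ∃ m, k = m + 1 := ⟨k - 1, by omega⟩
  rw [← Nat.cast_sum, sum_udLenCount, Nat.add_sub_cancel, eq_div_iff (by positivity),
    ← Nat.choose_mul_factorial_mul_factorial hkn]
  push_cast
  ring
end
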